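/- arXiv:1812.08470 — 3 statements merged into one kernel-verified Lean document; each statement's English description precedes it below -/
import Mathlib

section
/- Let 𝕊 ⊆ ℝ^ℓ (ℓ ≥ 2) be a state space. Then the following are equivalent: (i) for every n and every nonempty bounded set X ⊆ ℝⁿ whose affine span has dimension at most ℓ − 1, the set ddi(X | 𝕊) is a singleton; (ii) 𝕊 is a (hyper)-ellipsoid. -/
open MeasureTheory Metric Set

noncomputable section

/-- `Euc n` is the Euclidean space `ℝⁿ`. -/
abbrev Euc (n : ℕ) : Type := EuclideanSpace ℝ (Fin n)

/-- A state space of linear dimension `ℓ`: a compact convex set contained in (and affinely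
spanning) an affine hyperplane not through the origin, here written as `{x | f x = 1}`
for a nonzero linear functional `f`. -/
def IsStateSpace {ℓ : ℕ} (𝕊 : Set (Euc ℓ)) : Prop :=
  IsCompact 𝕊 ∧ Convex ℝ 𝕊 ∧
    ∃ f : Euc ℓ →ₗ[ℝ] ℝ, f ≠ 0 ∧
      (affineSpan ℝ 𝕊 : Set (Euc ℓ)) = {x | f x = 1}

/-- `R` is admissible for the data set `X` (w.r.t. the state space `𝕊`): it is the image of `𝕊`
under some linear map and satisfies `X ⊆ R ⊆ aff X`. -/
def Admissible {ℓ n : ℕ} (𝕊 : Set (Euc ℓ)) (X R : Set (Euc n)) : Prop :=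
  (∃ M : Euc ℓ →ₗ[ℝ] Euc n, R = M '' 𝕊) ∧ X ⊆ R ∧ R ⊆ (affineSpan ℝ X : Set (Euc n))

/-- Data-driven inference: the admissible sets for `X` of minimal `d`-dimensional Hausdorff
measure, where `d = dim aff X`. -/
def ddi {ℓ n : ℕ} (X : Set (Euc n)) (𝕊 : Set (Euc ℓ)) : Set (Set (Euc n)) :=
  {R | Admissible 𝕊 X R ∧ ∀ R' : Set (Euc n), Admissible 𝕊 X R' →
      μH[(Module.finrank ℝ (affineSpan ℝ X).direction : ℝ)] R ≤
        μH[(Module.finrank ℝ (affineSpan ℝ X).direction : ℝ)] R'}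

/-- A (hyper)-ellipsoid state space in `ℝ^ℓ`: the image of the closed unit ball of `ℝ^(ℓ-1)`
under an injective affine map. -/
def IsHyperEllipsoid {ℓ : ℕ} (𝕊 : Set (Euc ℓ)) : Prop :=
  ∃ F : Euc (ℓ - 1) →ᵃ[ℝ] Euc ℓ, Function.Injective F ∧ 𝕊 = F '' closedBall 0 1

/-!
If `𝕊` is an affine image of a ball, linear maps on `𝕊` amount to affine maps on the ball, so the
admissible sets for `X` are exactly the ellipsoids of `aff X` containing `X`. The one of least
volume, the Löwner ellipsoid, exists by compactness. For uniqueness, write ellipsoids as preimages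
of the unit ball under affine maps, so that least volume means largest determinant. Suppose two
optimal maps have linear parts `A` and `C A`, and let `W` be the orthogonal factor of `C`. The mean
of the first map composed with `W` and the second one is again feasible, and by the AM-GM inequality
for the singular values of `C` its determinant is larger unless `C = W`. If then the translation
parts differ, the mean has room to be scaled up.

Conversely, a unique minimal image `M '' 𝕊` around the unit ball of dimension `ℓ - 1` is invariant
under all linear isometries, so it is a ball. By dimension, `M` is injective on the hyperplane
containing `𝕊`, and its inverse presents `𝕊` as an affine image of that ball.
-/

section Determinant

variable {ι R M : Type*} [Fintype ι] [CommRing R] [AddCommGroup M] [Module R M]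

lemma det_eq_prod_mul_det_of_apply_basis (e : Module.Basis ι R M) {D W : M →ₗ[R] M} {t : ι → R}
    (h : ∀ i, D (e i) = t i • W (e i)) : LinearMap.det D = (∏ i, t i) * LinearMap.det W := by
  classical
  calc LinearMap.det D = e.det (D ∘ e) := by rw [e.det_comp, e.det_self, mul_one]
    _ = e.det fun i => t i • (W ∘ e) i := congrArg e.det (funext h)
    _ = (∏ i, t i) * LinearMap.det W := by
      rw [← smul_eq_mul, ← AlternatingMap.coe_multilinearMap, MultilinearMap.map_smul_univ,
        AlternatingMap.coe_multilinearMap, e.det_comp, e.det_self, mul_one]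

lemma continuous_det_apply {E V : Type*} [NormedAddCommGroup E] [NormedSpace ℝ E]
    [FiniteDimensional ℝ E] [NormedAddCommGroup V] [NormedSpace ℝ V] [FiniteDimensional ℝ V]
    (Φ : E →ₗ[ℝ] V →ₗ[ℝ] V) : Continuous fun x => LinearMap.det (Φ x) :=
  ContinuousLinearMap.continuous_det.comp
    (LinearMap.toContinuousLinearMap.toLinearMap ∘ₗ Φ).continuous_of_finiteDimensional

end Determinant

section SingularValues

/-- The `s i` are the singular values of `C`: the basis `e` diagonalizes `C* C`. -/
lemma exists_orthonormalBasis_apply_eq_smul_linearIsometry {𝕜 V V' : Type*} [RCLike 𝕜]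
    [NormedAddCommGroup V] [InnerProductSpace 𝕜 V] [FiniteDimensional 𝕜 V]
    [NormedAddCommGroup V'] [InnerProductSpace 𝕜 V'] [FiniteDimensional 𝕜 V']
    {C : V →ₗ[𝕜] V'} (hC : Function.Injective C) :
    ∃ (e : OrthonormalBasis (Fin (Module.finrank 𝕜 V)) 𝕜 V) (W : V →ₗᵢ[𝕜] V')
      (s : Fin (Module.finrank 𝕜 V) → ℝ),
      (∀ i, 0 < s i) ∧ ∀ i, C (e i) = (s i : 𝕜) • W (e i) := by
  have hsymm : (LinearMap.adjoint C ∘ₗ C).IsSymmetric := C.isPositive_adjoint_comp_self.isSymmetric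
  let e := hsymm.eigenvectorBasis rfl
  have horth : ∀ i j, i ≠ j → inner 𝕜 (C (e i)) (C (e j)) = 0 := by
    intro i j hij
    rw [← LinearMap.adjoint_inner_right, ← LinearMap.comp_apply, hsymm.apply_eigenvectorBasis,
      inner_smul_right, e.inner_eq_zero hij, mul_zero]
  have hpos : ∀ i, 0 < ‖C (e i)‖ := fun i =>
    norm_pos_iff.2 ((map_ne_zero_iff C hC).2 (e.orthonormal.ne_zero i))
  let w : Fin (Module.finrank 𝕜 V) → V' := fun i => (‖C (e i)‖⁻¹ : 𝕜) • C (e i)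
  have hw : Orthonormal 𝕜 w := by
    refine ⟨fun i => norm_smul_inv_norm (norm_pos_iff.1 (hpos i)), fun i j hij => ?_⟩
    simp only [w, inner_smul_left, inner_smul_right, horth i j hij, mul_zero]
  let W : V →ₗᵢ[𝕜] V' := (e.toBasis.constr 𝕜 w).isometryOfOrthonormal
    (v := e.toBasis) (by simp) (by convert hw using 1; ext i; simp)
  have hW : ∀ i, W (e i) = w i := fun i => by
    rw [← e.coe_toBasis]; exact e.toBasis.constr_basis 𝕜 w i
  refine ⟨e, W, fun i => ‖C (e i)‖, hpos, fun i => ?_⟩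
  rw [hW, smul_inv_smul₀ (RCLike.ofReal_ne_zero.2 (hpos i).ne')]

lemma eq_one_of_prod_eq_one_of_prod_half_one_add_le_one {ι : Type*} [Fintype ι] {s : ι → ℝ}
    (hs : ∀ i, 0 < s i) (hprod : ∏ i, s i = 1) (hmean : ∏ i, (1 + s i) / 2 ≤ 1) (i : ι) :
    s i = 1 := by
  by_contra hi
  have hlt : ∏ j, s j < ∏ j, ((1 + s j) / 2) ^ 2 :=
    Finset.prod_lt_prod (fun j _ => hs j) (fun j _ => by nlinarith [sq_nonneg (1 - s j)])
      ⟨i, Finset.mem_univ i, by nlinarith [sq_pos_of_ne_zero (sub_ne_zero.2 (Ne.symm hi))]⟩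
  have hnonneg : 0 ≤ ∏ j, (1 + s j) / 2 := Finset.prod_nonneg fun j _ => by linarith [hs j]
  rw [hprod, Finset.prod_pow] at hlt
  exact hlt.not_ge (pow_le_one₀ hnonneg hmean)

variable {V : Type*} [NormedAddCommGroup V] [InnerProductSpace ℝ V] [FiniteDimensional ℝ V]

lemma abs_det_linearIsometry (W : V →ₗᵢ[ℝ] V) : |LinearMap.det W.toLinearMap| = 1 := by
  rw [← LinearMap.normDet_eq_abs_det, W.normDet_eq_one]

/-- The isometry is the orthogonal factor of `C`, so the determinant of the mean is
`∏ (1 + sᵢ) / 2` for the singular values `sᵢ` of `C`. -/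
lemma exists_linearIsometry_eq_of_abs_det_mean_le_one {C : V →ₗ[ℝ] V}
    (hC : |LinearMap.det C| = 1) :
    ∃ W : V →ₗᵢ[ℝ] V,
      |LinearMap.det ((2⁻¹ : ℝ) • (W.toLinearMap + C))| ≤ 1 → C = W.toLinearMap := by
  have hdet : LinearMap.det C ≠ 0 := abs_ne_zero.1 (hC ▸ one_ne_zero)
  have hinj : Function.Injective C := (LinearMap.equivOfDetNeZero C hdet).injective
  obtain ⟨e, W, s, hs, hCe⟩ := exists_orthonormalBasis_apply_eq_smul_linearIsometry hinj
  replace hCe : ∀ i, C (e i) = s i • W (e i) := hCe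
  have habs : ∀ {D : V →ₗ[ℝ] V} {t : Fin (Module.finrank ℝ V) → ℝ},
      (∀ i, D (e i) = t i • W (e i)) → |LinearMap.det D| = |∏ i, t i| := fun {D t} hD => by
    rw [det_eq_prod_mul_det_of_apply_basis e.toBasis (W := W.toLinearMap) (t := t)
      (by simpa using hD), abs_mul, abs_det_linearIsometry, mul_one]
  have hmean : ∀ i, ((2⁻¹ : ℝ) • (W.toLinearMap + C)) (e i) = ((1 + s i) / 2) • W (e i) := by
    intro i
    simp only [LinearMap.smul_apply, LinearMap.add_apply, LinearIsometry.coe_toLinearMap, hCe]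
    module
  refine ⟨W, fun hle => e.toBasis.ext fun i => ?_⟩
  have hprod : ∏ i, s i = 1 := by
    rw [← abs_of_nonneg (Finset.prod_nonneg fun i _ => (hs i).le), ← habs hCe, hC]
  have hs1 : s i = 1 := eq_one_of_prod_eq_one_of_prod_half_one_add_le_one hs hprod
    ((le_abs_self _).trans (habs hmean ▸ hle)) i
  simp [hCe, hs1]

end SingularValues

lemma sum_affineBasis_coord_smul_apply {ι k V P W : Type*} [Fintype ι] [Ring k] [AddCommGroup V]
    [Module k V] [AddTorsor V P] [AddCommGroup W] [Module k W] (b : AffineBasis ι k P)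
    (ψ : P →ᵃ[k] W) (x : P) : ∑ i, b.coord i x • ψ (b i) = ψ x := by
  have hsum := b.sum_coord_apply_eq_one x
  calc ∑ i, b.coord i x • ψ (b i)
      = Finset.univ.affineCombination k (ψ ∘ b) fun i => b.coord i x :=
        (Finset.univ.affineCombination_eq_linear_combination _ _ hsum).symm
    _ = ψ x := by
      rw [← Finset.univ.map_affineCombination b _ hsum, b.affineCombination_coord_eq_self]

section DetMaximal

variable {V : Type*} [NormedAddCommGroup V] [InnerProductSpace ℝ V] {X : Set V}
  {φ ψ : V →ᵃ[ℝ] V}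

/-- `φ` has maximal absolute determinant among the affine maps that send `X` into the closed unit
ball. The ellipsoid `φ ⁻¹' closedBall 0 1` then has minimal volume among those containing `X`. -/
def IsDetMaximal (X : Set V) (φ : V →ᵃ[ℝ] V) : Prop :=
  MapsTo φ X (closedBall 0 1) ∧ ∀ ψ : V →ᵃ[ℝ] V, MapsTo ψ X (closedBall 0 1) →
    |LinearMap.det ψ.linear| ≤ |LinearMap.det φ.linear|

/-- An affine map is encoded by its values on an affine basis contained in `X`; these values range
over a compact set. -/
lemma exists_isDetMaximal [FiniteDimensional ℝ V] (hspan : affineSpan ℝ X = ⊤) :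
    ∃ φ, IsDetMaximal X φ := by
  obtain ⟨s, hsX, b, hb⟩ := AffineBasis.exists_affine_subbasis hspan
  have : Finite s := finite_of_fin_dim_affineIndependent ℝ b.ind
  have : Fintype s := Fintype.ofFinite s
  let L : (s → V) →ₗ[ℝ] V →ₗ[ℝ] V :=
    LinearMap.lcomp ℝ V b.coords.linear ∘ₗ Fintype.bilinearCombination ℝ ℝ
  let Φ : (s → V) → V →ᵃ[ℝ] V := fun f =>
    (Fintype.linearCombination ℝ f).toAffineMap.comp b.coords
  have hΦ : ∀ f x, Φ f x = ∑ i, b.coord i x • f i := fun f x => rfl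
  have hΦ_values : ∀ ψ : V →ᵃ[ℝ] V, Φ (ψ ∘ b) = ψ := fun ψ =>
    AffineMap.ext (sum_affineBasis_coord_smul_apply b ψ)
  have hΦ_basis : ∀ f i, Φ f (b i) = f i := fun f i => by
    classical
    simp [hΦ, b.coord_apply]
  let K : Set (s → V) := {f | MapsTo (Φ f) X (closedBall 0 1)}
  have hKclosed : IsClosed K := by
    have : K = ⋂ x ∈ X, {f | ‖∑ i, b.coord i x • f i‖ ≤ 1} := by
      ext f; simp [K, MapsTo, hΦ]
    rw [this]
    exact isClosed_biInter fun x _ => isClosed_le (by fun_prop) continuous_const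
  have hKsub : K ⊆ closedBall 0 1 := fun f hf => by
    refine mem_closedBall_zero_iff.2 ((pi_norm_le_iff_of_nonneg zero_le_one).2 fun i => ?_)
    have hbi : b i ∈ X := hb ▸ hsX i.2
    simpa [hΦ_basis] using hf hbi
  have hKcompact : IsCompact K := (isCompact_closedBall 0 1).of_isClosed_subset hKclosed hKsub
  obtain ⟨f, hfK, hfmax⟩ := hKcompact.exists_isMaxOn ⟨0, fun x _ => by simp [hΦ]⟩
    (continuous_det_apply L).abs.continuousOn
  refine ⟨Φ f, hfK, fun ψ hψ => ?_⟩
  have hψK : ψ ∘ b ∈ K := by rwa [mem_ofPred_eq, hΦ_values]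
  have hle : |LinearMap.det (Φ (ψ ∘ b)).linear| ≤ |LinearMap.det (Φ f).linear| := hfmax hψK
  rwa [hΦ_values] at hle

lemma norm_half_smul_add_sq_le {x y : V} (hx : ‖x‖ ≤ 1) (hy : ‖y‖ ≤ 1) :
    ‖(2⁻¹ : ℝ) • (x + y)‖ ^ 2 ≤ 1 - ‖x - y‖ ^ 2 / 4 := by
  have hpar := parallelogram_law_with_norm ℝ x y
  have hx2 := mul_le_one₀ hx (norm_nonneg x) hx
  have hy2 := mul_le_one₀ hy (norm_nonneg y) hy
  rw [norm_smul, mul_pow, Real.norm_of_nonneg (by norm_num)]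
  linarith

namespace IsDetMaximal

lemma det_linear_ne_zero (hφ : IsDetMaximal X φ) (hX : Bornology.IsBounded X) :
    LinearMap.det φ.linear ≠ 0 := by
  obtain ⟨r, hr, hrX⟩ := hX.exists_pos_norm_le
  have hmaps : MapsTo (r⁻¹ • LinearMap.id (R := ℝ) (M := V)).toAffineMap X (closedBall 0 1) := by
    intro x hx
    rw [mem_closedBall_zero_iff, LinearMap.coe_toAffineMap, LinearMap.smul_apply,
      LinearMap.id_apply, norm_smul, norm_inv, Real.norm_of_nonneg hr.le]
    exact inv_mul_le_one_of_le₀ (hrX x hx) hr.le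
  refine abs_pos.1 (lt_of_lt_of_le ?_ (hφ.2 _ hmaps))
  rw [LinearMap.toAffineMap_linear, LinearMap.det_smul, LinearMap.det_id]
  positivity

variable [FiniteDimensional ℝ V]

lemma linearIsometry_comp (hφ : IsDetMaximal X φ) (W : V →ₗᵢ[ℝ] V) :
    IsDetMaximal X (W.toLinearMap.toAffineMap.comp φ) := by
  refine ⟨fun x hx => ?_, fun ψ hψ => (hφ.2 ψ hψ).trans_eq ?_⟩
  · simpa using hφ.1 hx
  · rw [AffineMap.comp_linear, LinearMap.toAffineMap_linear, LinearMap.det_comp, abs_mul,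
      abs_det_linearIsometry, one_mul]

lemma exists_linear_eq_linearIsometry_comp (hφ : IsDetMaximal X φ) (hψ : IsDetMaximal X ψ)
    (hdet : LinearMap.det φ.linear ≠ 0) :
    ∃ W : V →ₗᵢ[ℝ] V, ψ.linear = W.toLinearMap ∘ₗ φ.linear := by
  let A := LinearMap.equivOfDetNeZero φ.linear hdet
  let C : V →ₗ[ℝ] V := ψ.linear ∘ₗ A.symm
  have hCA : C ∘ₗ φ.linear = ψ.linear := LinearMap.ext fun x =>
    congrArg ψ.linear (A.symm_apply_apply x)
  have hpos : 0 < |LinearMap.det φ.linear| := abs_pos.2 hdet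
  have hdetC : |LinearMap.det C| = 1 := by
    rw [← mul_eq_right₀ hpos.ne', ← abs_mul, ← LinearMap.det_comp, hCA]
    exact le_antisymm (hφ.2 ψ hψ.1) (hψ.2 φ hφ.1)
  obtain ⟨W, hW⟩ := exists_linearIsometry_eq_of_abs_det_mean_le_one hdetC
  suffices hmean : |LinearMap.det ((2⁻¹ : ℝ) • (W.toLinearMap + C))| ≤ 1 from
    ⟨W, by rw [← hW hmean, hCA]⟩
  let θ : V →ᵃ[ℝ] V := (2⁻¹ : ℝ) • (W.toLinearMap.toAffineMap.comp φ + ψ)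
  have hθ : MapsTo θ X (closedBall 0 1) := fun x hx => by
    have h := convex_closedBall (0 : V) 1 ((hφ.linearIsometry_comp W).1 hx) (hψ.1 hx)
      (by norm_num : (0 : ℝ) ≤ 2⁻¹) (by norm_num : (0 : ℝ) ≤ 2⁻¹) (by norm_num)
    rwa [← smul_add] at h
  have hθ_linear : θ.linear = ((2⁻¹ : ℝ) • (W.toLinearMap + C)) ∘ₗ φ.linear := by
    rw [LinearMap.smul_comp, LinearMap.add_comp, hCA]; rfl
  have hle := hφ.2 θ hθ
  rw [hθ_linear, LinearMap.det_comp, abs_mul] at hle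
  exact (mul_le_iff_le_one_left hpos).1 hle

/-- If the centers differed, the mean of `φ` and `ψ` could be scaled up and would still map `X`
into the unit ball, by the parallelogram law. -/
lemma eq_of_linear_eq (hφ : IsDetMaximal X φ) (hψ : MapsTo ψ X (closedBall 0 1))
    (hdet : LinearMap.det φ.linear ≠ 0) (hlin : ψ.linear = φ.linear) : ψ = φ := by
  have hdiff : ∀ x, ψ x - φ x = ψ 0 - φ 0 := fun x => by
    rw [congrFun ψ.decomp x, congrFun φ.decomp x, hlin]; simp
  by_contra hne
  have hc : ψ 0 - φ 0 ≠ 0 := fun h => hne <| AffineMap.ext fun x => sub_eq_zero.1 (hdiff x ▸ h)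
  have : Nontrivial V := ⟨_, _, hc⟩
  set δ : ℝ := ‖ψ 0 - φ 0‖ ^ 2 / 4
  have hδ : 0 < δ := by positivity
  have hmean : ∀ x ∈ X, ‖(2⁻¹ : ℝ) • (φ x + ψ x)‖ ^ 2 ≤ 1 - δ := fun x hx => by
    have hφx : ‖φ x‖ ≤ 1 := mem_closedBall_zero_iff.1 (hφ.1 hx)
    have hψx : ‖ψ x‖ ≤ 1 := mem_closedBall_zero_iff.1 (hψ hx)
    have h := norm_half_smul_add_sq_le hφx hψx
    rwa [norm_sub_rev, hdiff x] at h
  let θ : V →ᵃ[ℝ] V := √(1 + δ) • (2⁻¹ : ℝ) • (φ + ψ)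
  have hθ : MapsTo θ X (closedBall 0 1) := fun x hx => by
    rw [mem_closedBall_zero_iff, ← sq_le_one_iff₀ (norm_nonneg _)]
    calc ‖θ x‖ ^ 2 = (1 + δ) * ‖(2⁻¹ : ℝ) • (φ x + ψ x)‖ ^ 2 := by
          change ‖√(1 + δ) • (2⁻¹ : ℝ) • (φ x + ψ x)‖ ^ 2 = _
          rw [norm_smul, mul_pow, Real.norm_eq_abs, sq_abs, Real.sq_sqrt (by positivity)]
      _ ≤ (1 + δ) * (1 - δ) := by gcongr; exact hmean x hx
      _ ≤ 1 := by nlinarith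
  have hθ_linear : θ.linear = √(1 + δ) • φ.linear := by
    simp only [θ, AffineMap.smul_linear, AffineMap.add_linear, hlin]
    module
  have hle := hφ.2 θ hθ
  rw [hθ_linear, LinearMap.det_smul, abs_mul, abs_pow, abs_of_nonneg (Real.sqrt_nonneg _),
    mul_le_iff_le_one_left (abs_pos.2 hdet)] at hle
  exact hle.not_gt (one_lt_pow₀ (Real.lt_sqrt_of_sq_lt (by linarith)) Module.finrank_pos.ne')

lemma preimage_closedBall_eq (hφ : IsDetMaximal X φ) (hψ : IsDetMaximal X ψ)
    (hdet : LinearMap.det φ.linear ≠ 0) (r : ℝ) :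
    ψ ⁻¹' closedBall 0 r = φ ⁻¹' closedBall 0 r := by
  obtain ⟨W, hW⟩ := hφ.exists_linear_eq_linearIsometry_comp hψ hdet
  have hWφ := hφ.linearIsometry_comp W
  have hWdet : LinearMap.det (W.toLinearMap.toAffineMap.comp φ).linear ≠ 0 :=
    abs_pos.1 ((abs_pos.2 hdet).trans_le (hWφ.2 φ hφ.1))
  rw [hWφ.eq_of_linear_eq hψ.1 hWdet hW]
  ext x
  simp

end IsDetMaximal

end DetMaximal

section Ellipsoid

variable {V : Type*} [NormedAddCommGroup V] [InnerProductSpace ℝ V]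

/-- A full-dimensional closed ellipsoid of `V`. Taking the preimage of the unit ball rather than its
image makes the inclusion `X ⊆ E` a bound on the values of the affine map on `X`. -/
def IsEllipsoid (E : Set V) : Prop :=
  ∃ φ : V ≃ᵃ[ℝ] V, E = φ ⁻¹' closedBall 0 1

variable [FiniteDimensional ℝ V]

lemma isEllipsoid_preimage_closedBall {φ : V →ᵃ[ℝ] V} (hφ : LinearMap.det φ.linear ≠ 0) :
    IsEllipsoid (φ ⁻¹' closedBall 0 1) :=
  ⟨AffineEquiv.ofBijective ((AffineMap.linear_bijective_iff φ).1
    (LinearMap.equivOfDetNeZero φ.linear hφ).bijective), rfl⟩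

variable [MeasurableSpace V] [BorelSpace V] (μ : Measure V) [μ.IsAddHaarMeasure]

lemma addHaar_preimage_affineMap_closedBall {φ : V →ᵃ[ℝ] V} (hφ : LinearMap.det φ.linear ≠ 0)
    (r : ℝ) : μ (φ ⁻¹' closedBall 0 r) =
      ENNReal.ofReal |(LinearMap.det φ.linear)⁻¹| * μ (closedBall 0 r) := by
  have hpre : φ ⁻¹' closedBall 0 r = φ.linear ⁻¹' closedBall (-φ 0) r := by
    ext x
    rw [mem_preimage, mem_preimage, mem_closedBall_zero_iff, mem_closedBall, dist_eq_norm,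
      sub_neg_eq_add]
    exact iff_of_eq (congrArg (‖·‖ ≤ r) (congrFun φ.decomp x))
  rw [hpre, Measure.addHaar_preimage_linearMap _ hφ, Measure.addHaar_closedBall_center]

lemma addHaar_preimage_closedBall_le_iff {φ ψ : V →ᵃ[ℝ] V} (hφ : LinearMap.det φ.linear ≠ 0)
    (hψ : LinearMap.det ψ.linear ≠ 0) :
    μ (φ ⁻¹' closedBall 0 1) ≤ μ (ψ ⁻¹' closedBall 0 1) ↔
      |LinearMap.det ψ.linear| ≤ |LinearMap.det φ.linear| := by
  rw [addHaar_preimage_affineMap_closedBall μ hφ, addHaar_preimage_affineMap_closedBall μ hψ,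
    ENNReal.mul_le_mul_iff_left (measure_closedBall_pos μ 0 one_pos).ne'
      measure_closedBall_lt_top.ne, ENNReal.ofReal_le_ofReal_iff (abs_nonneg _),
    abs_inv, abs_inv, inv_le_inv₀ (abs_pos.2 hφ) (abs_pos.2 hψ)]

theorem existsUnique_isEllipsoid_measure_minimal {X : Set V} (hX : Bornology.IsBounded X)
    (hspan : affineSpan ℝ X = ⊤) :
    ∃! E, (IsEllipsoid E ∧ X ⊆ E) ∧ ∀ E', IsEllipsoid E' → X ⊆ E' → μ E ≤ μ E' := by
  obtain ⟨φ, hφ⟩ := exists_isDetMaximal hspan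
  have hφdet := hφ.det_linear_ne_zero hX
  have hdet : ∀ ψ : V ≃ᵃ[ℝ] V, LinearMap.det (ψ : V →ᵃ[ℝ] V).linear ≠ 0 := fun ψ =>
    ψ.linear.isUnit_det'.ne_zero
  refine ⟨φ ⁻¹' closedBall 0 1,
    ⟨⟨isEllipsoid_preimage_closedBall hφdet, hφ.1⟩, ?_⟩, ?_⟩
  · rintro _ ⟨ψ, rfl⟩ hψX
    exact (addHaar_preimage_closedBall_le_iff μ hφdet (hdet ψ)).2 (hφ.2 ψ hψX)
  · rintro _ ⟨⟨⟨ψ, rfl⟩, hψX⟩, hmin⟩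
    have hle := (addHaar_preimage_closedBall_le_iff μ (hdet ψ) hφdet).1
      (hmin _ (isEllipsoid_preimage_closedBall hφdet) hφ.1)
    have hψ : IsDetMaximal X (ψ : V →ᵃ[ℝ] V) := ⟨hψX, fun θ hθ => (hφ.2 θ hθ).trans hle⟩
    exact hφ.preimage_closedBall_eq hψ hφdet 1

end Ellipsoid

section BallImages

section Adjoint

variable {𝕜 U V : Type*} [RCLike 𝕜] [NormedAddCommGroup U] [InnerProductSpace 𝕜 U]
  [FiniteDimensional 𝕜 U] [NormedAddCommGroup V] [InnerProductSpace 𝕜 V] [FiniteDimensional 𝕜 V]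

lemma adjoint_image_closedBall (W : V →ₗᵢ[𝕜] U) (r : ℝ) :
    W.toLinearMap.adjoint '' closedBall 0 r = closedBall 0 r := by
  have hleft : ∀ v, W.toLinearMap.adjoint (W v) = v := LinearMap.congr_fun W.adjoint_comp_self'
  have := FiniteDimensional.complete 𝕜 U
  have := FiniteDimensional.complete 𝕜 V
  have hcontr : ∀ u, ‖W.toLinearMap.adjoint u‖ ≤ ‖u‖ := fun u =>
    (W.toContinuousLinearMap.adjoint.le_opNorm u).trans <| mul_le_of_le_one_left (norm_nonneg u) <|
      (LinearIsometryEquiv.norm_map _ _).trans_le W.norm_toContinuousLinearMap_le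
  refine Subset.antisymm ?_ fun v hv => ⟨W v, by simpa using hv, hleft v⟩
  rintro _ ⟨u, hu, rfl⟩
  exact mem_closedBall_zero_iff.2 ((hcontr u).trans (mem_closedBall_zero_iff.1 hu))

/-- This is the singular value decomposition of the adjoint of `L`. -/
lemma exists_linearEquiv_comp_adjoint_linearIsometry_eq {L : U →ₗ[𝕜] V}
    (hL : Function.Surjective L) :
    ∃ (T : V ≃ₗ[𝕜] V) (W : V →ₗᵢ[𝕜] U), T.toLinearMap ∘ₗ W.toLinearMap.adjoint = L := by
  have hinj : Function.Injective L.adjoint := by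
    rw [← LinearMap.ker_eq_bot, ← LinearMap.orthogonal_range, LinearMap.range_eq_top.2 hL,
      Submodule.top_orthogonal_eq_bot]
  obtain ⟨e, W, s, -, hs⟩ := exists_orthonormalBasis_apply_eq_smul_linearIsometry hinj
  let P : V →ₗ[𝕜] V := e.toBasis.constr 𝕜 fun i => (s i : 𝕜) • e i
  have hP : ∀ i, P (e i) = (s i : 𝕜) • e i := fun i => by
    rw [← e.coe_toBasis]; exact e.toBasis.constr_basis 𝕜 _ i
  have hWP : W.toLinearMap ∘ₗ P = L.adjoint := e.toBasis.ext fun i => by simp [hP, hs]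
  have hL_eq : P.adjoint ∘ₗ W.toLinearMap.adjoint = L := by
    rw [← LinearMap.adjoint_comp, hWP, LinearMap.adjoint_adjoint]
  have hsurj : Function.Surjective P.adjoint := .of_comp (hL_eq ▸ hL)
  exact ⟨.ofBijective P.adjoint ⟨LinearMap.injective_iff_surjective.2 hsurj, hsurj⟩, W, hL_eq⟩

lemma nonempty_linearIsometry_of_finrank_le (h : Module.finrank 𝕜 V ≤ Module.finrank 𝕜 U) :
    Nonempty (V →ₗᵢ[𝕜] U) := by
  obtain ⟨C, hC⟩ := finrank_le_iff_exists_linearMap.1 h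
  obtain ⟨-, W, -⟩ := exists_orthonormalBasis_apply_eq_smul_linearIsometry hC
  exact ⟨W⟩

end Adjoint

variable {U V : Type*} [NormedAddCommGroup U] [InnerProductSpace ℝ U] [FiniteDimensional ℝ U]
  [NormedAddCommGroup V] [InnerProductSpace ℝ V] [FiniteDimensional ℝ V]

lemma isEllipsoid_image_closedBall {G : U →ᵃ[ℝ] V} (hG : Function.Surjective G) :
    IsEllipsoid (G '' closedBall 0 1) := by
  obtain ⟨T, W, hTW⟩ :=
    exists_linearEquiv_comp_adjoint_linearIsometry_eq (G.linear_surjective_iff.2 hG)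
  let ψ : V ≃ᵃ[ℝ] V := T.toAffineEquiv.trans (AffineEquiv.constVAdd ℝ V (G 0))
  have hGψ : ∀ u, G u = ψ (W.toLinearMap.adjoint u) := fun u => by
    rw [congrFun G.decomp u, ← hTW]
    exact add_comm _ _
  refine ⟨ψ.symm, ?_⟩
  rw [funext hGψ, ← image_image ψ, adjoint_image_closedBall]
  exact ψ.toEquiv.image_eq_preimage_symm _

lemma IsEllipsoid.exists_affineMap_image_closedBall {E : Set V} (hE : IsEllipsoid E)
    (h : Module.finrank ℝ V ≤ Module.finrank ℝ U) :
    ∃ G : U →ᵃ[ℝ] V, G '' closedBall 0 1 = E := by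
  obtain ⟨φ, rfl⟩ := hE
  obtain ⟨W⟩ := nonempty_linearIsometry_of_finrank_le h
  refine ⟨φ.symm.toAffineMap.comp W.toLinearMap.adjoint.toAffineMap, ?_⟩
  rw [AffineMap.coe_comp, image_comp]
  change φ.symm '' (W.toLinearMap.adjoint '' closedBall 0 1) = _
  rw [adjoint_image_closedBall]
  exact φ.toEquiv.symm.image_eq_preimage_symm _

end BallImages

section AffineMaps

variable {k U V E : Type*} [Field k] [AddCommGroup U] [Module k U] [AddCommGroup V] [Module k V]
  [AddCommGroup E] [Module k E]

lemma exists_linearMap_comp_affineMap_eq (f : E →ₗ[k] k) {F : U →ᵃ[k] E}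
    (hF : Function.Injective F) (hfF : ∀ x, f (F x) = 1) (G : U →ᵃ[k] V) :
    ∃ M : E →ₗ[k] V, ∀ x, M (F x) = G x := by
  obtain ⟨r, hr⟩ := F.linear.exists_leftInverse_of_injective
    (LinearMap.ker_eq_bot.2 (F.linear_injective_iff.2 hF))
  refine ⟨G.linear ∘ₗ r ∘ₗ (LinearMap.id - f.smulRight (F 0)) + f.smulRight (G 0), fun x => ?_⟩
  have hrF : r (F x - F 0) = x := by
    simpa using (congrArg r (F.linearMap_vsub x 0)).symm.trans (LinearMap.congr_fun hr _)
  simp [hfF, hrF, congrFun G.decomp x]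

lemma exists_affineMap_leftInverse {ι : V →ᵃ[k] E} (hι : Function.Injective ι) :
    ∃ ρ : E →ᵃ[k] V, Function.LeftInverse ρ ι := by
  obtain ⟨r, hr⟩ := ι.linear.exists_leftInverse_of_injective
    (LinearMap.ker_eq_bot.2 (ι.linear_injective_iff.2 hι))
  refine ⟨r.toAffineMap.comp (AffineEquiv.vaddConst k (ι 0)).symm.toAffineMap, fun v => ?_⟩
  change r (ι v -ᵥ ι 0) = v
  rw [← ι.linearMap_vsub, vsub_eq_sub, sub_zero]
  exact LinearMap.congr_fun hr v

lemma affineMap_surjective_of_subset_range {G : U →ᵃ[k] V} {Y : Set V}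
    (hspan : affineSpan k Y = ⊤) (hY : Y ⊆ range G) : Function.Surjective G := by
  have hle : affineSpan k Y ≤ (⊤ : AffineSubspace k U).map G :=
    affineSpan_le.2 (by simpa using hY)
  rw [hspan] at hle
  intro v
  simpa using hle (AffineSubspace.mem_top k V v)

lemma affineSpan_preimage_eq_top {ι : V →ᵃ[k] E} (hι : Function.Injective ι) {X : Set E}
    (hrange : range ι = affineSpan k X) : affineSpan k (ι ⁻¹' X) = ⊤ := by
  have himage : ι '' (ι ⁻¹' X) = X :=
    image_preimage_eq_of_subset (hrange ▸ subset_affineSpan k X)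
  rw [← AffineSubspace.comap_map_eq_of_injective hι (affineSpan k (ι ⁻¹' X)),
    AffineSubspace.map_span, himage]
  ext v
  simp [← SetLike.mem_coe, ← hrange]

end AffineMaps

lemma exists_affineIsometry_range_eq {𝕜 V P : Type*} [NormedField 𝕜] [SeminormedAddCommGroup V]
    [NormedSpace 𝕜 V] [PseudoMetricSpace P] [NormedAddTorsor V P] {S : AffineSubspace 𝕜 P}
    (hS : (S : Set P).Nonempty) : ∃ ι : S.direction →ᵃⁱ[𝕜] P, range ι = S := by
  obtain ⟨p, hp⟩ := hS
  have : Nonempty S := ⟨⟨p, hp⟩⟩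
  refine ⟨S.subtypeₐᵢ.comp (AffineIsometryEquiv.vaddConst 𝕜 ⟨p, hp⟩).toAffineIsometry, ?_⟩
  rw [AffineIsometry.coe_comp, AffineIsometryEquiv.coe_toAffineIsometry,
    (AffineIsometryEquiv.surjective _).range_comp]
  exact Subtype.range_coe

lemma affineSpan_closedBall_eq_top {V : Type*} [NormedAddCommGroup V] [NormedSpace ℝ V] (x : V)
    {r : ℝ} (hr : 0 < r) : affineSpan ℝ (closedBall x r) = ⊤ := by
  refine affineSpan_eq_top_of_nonempty_interior ⟨x, ?_⟩
  rw [(convex_closedBall x r).convexHull_eq]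
  exact ball_subset_interior_closedBall (mem_ball_self hr)

section Inference

variable {V : Type*} [NormedAddCommGroup V] [InnerProductSpace ℝ V] [FiniteDimensional ℝ V]

lemma exists_isEllipsoid_image_closedBall_eq {U E : Type*} [NormedAddCommGroup U]
    [InnerProductSpace ℝ U] [FiniteDimensional ℝ U] [AddCommGroup E] [Module ℝ E] {X : Set E}
    {ι : V →ᵃ[ℝ] E} (hι : Function.Injective ι) (hspan : affineSpan ℝ (ι ⁻¹' X) = ⊤)
    {G : U →ᵃ[ℝ] E} (hX : X ⊆ G '' closedBall 0 1) (hG : G '' closedBall 0 1 ⊆ range ι) :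
    ∃ D, IsEllipsoid D ∧ G '' closedBall 0 1 = ι '' D := by
  obtain ⟨ρ, hρ⟩ := exists_affineMap_leftInverse hι
  have hιρ : ι '' (ρ.comp G '' closedBall 0 1) = G '' closedBall 0 1 := by
    rw [AffineMap.coe_comp, image_comp]
    exact (hρ.rightInvOn_range.mono hG).image_image
  refine ⟨_, isEllipsoid_image_closedBall (G := ρ.comp G) ?_, hιρ.symm⟩
  refine affineMap_surjective_of_subset_range hspan fun v hv => ?_
  obtain ⟨x, -, hx⟩ := hX hv
  exact ⟨x, by rw [AffineMap.comp_apply, hx, hρ]⟩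

variable {ℓ n : ℕ} {F : Euc (ℓ - 1) →ᵃ[ℝ] Euc ℓ} {f : Euc ℓ →ₗ[ℝ] ℝ} {X : Set (Euc n)}
  {ι : V →ᵃⁱ[ℝ] Euc n}

lemma admissible_image_closedBall_iff (hF : Function.Injective F) (hfF : ∀ x, f (F x) = 1)
    (hι : range ι = affineSpan ℝ X) (hd : Module.finrank ℝ V ≤ ℓ - 1) {R : Set (Euc n)} :
    Admissible (F '' closedBall 0 1) X R ↔
      ∃ D, (IsEllipsoid D ∧ ι ⁻¹' X ⊆ D) ∧ R = ι '' D := by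
  constructor
  · rintro ⟨⟨M, rfl⟩, hX, hR⟩
    rw [← hι] at hR
    rw [image_image] at hX hR ⊢
    obtain ⟨D, hD, hD_eq⟩ := exists_isEllipsoid_image_closedBall_eq (ι := ι.toAffineMap)
      (G := M.toAffineMap.comp F) ι.injective (affineSpan_preimage_eq_top ι.injective hι) hX hR
    refine ⟨D, ⟨hD, ?_⟩, hD_eq⟩
    rw [← preimage_image_eq D ι.injective]
    exact preimage_mono (hX.trans_eq hD_eq)
  · rintro ⟨D, ⟨hD, hXD⟩, rfl⟩
    obtain ⟨G, rfl⟩ :=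
      hD.exists_affineMap_image_closedBall (U := Euc (ℓ - 1)) (by simpa using hd)
    obtain ⟨M, hM⟩ := exists_linearMap_comp_affineMap_eq f hF hfF (ι.toAffineMap.comp G)
    refine ⟨⟨M, ?_⟩, ?_, hι ▸ image_subset_range _ _⟩
    · rw [image_image, image_image]
      exact image_congr fun x _ => (hM x).symm
    · intro x hx
      obtain ⟨v, rfl⟩ : x ∈ range ι := hι ▸ subset_affineSpan ℝ X hx
      exact mem_image_of_mem ι (hXD hx)

theorem exists_ddi_image_closedBall_eq_singleton (hF : Function.Injective F)
    (hfF : ∀ x, f (F x) = 1) (hne : X.Nonempty) (hX : Bornology.IsBounded X)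
    (hd : Module.finrank ℝ (affineSpan ℝ X).direction ≤ ℓ - 1) :
    ∃ Y, ddi X (F '' closedBall 0 1) = {Y} := by
  obtain ⟨ι, hι⟩ := exists_affineIsometry_range_eq (hne.mono (subset_affineSpan ℝ X))
  let μ : Measure (affineSpan ℝ X).direction :=
    μH[Module.finrank ℝ (affineSpan ℝ X).direction]
  obtain ⟨D, ⟨hD, hmin⟩, hunique⟩ := existsUnique_isEllipsoid_measure_minimal
    μ (ι.isometry.antilipschitz.isBounded_preimage hX) (affineSpan_preimage_eq_top ι.injective hι)
  have hadm : ∀ {R}, Admissible (F '' closedBall 0 1) X R ↔ _ :=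
    admissible_image_closedBall_iff hF hfF hι hd
  have hmeasure : ∀ D', μH[Module.finrank ℝ (affineSpan ℝ X).direction] (ι '' D') = μ D' :=
    fun D' => ι.isometry.hausdorffMeasure_image (Or.inl (Nat.cast_nonneg _)) D'
  refine ⟨ι '' D, eq_singleton_iff_unique_mem.2 ⟨⟨hadm.2 ⟨D, hD, rfl⟩, ?_⟩, ?_⟩⟩
  · intro R hR
    obtain ⟨D', ⟨hD', hXD'⟩, rfl⟩ := hadm.1 hR
    rw [hmeasure, hmeasure]
    exact hmin D' hD' hXD'
  · rintro R ⟨hR, hRmin⟩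
    obtain ⟨D', hD', rfl⟩ := hadm.1 hR
    rw [hunique D' ⟨hD', fun D'' hD'' hXD'' => ?_⟩]
    have hle := hRmin _ (hadm.2 ⟨D'', ⟨hD'', hXD''⟩, rfl⟩)
    rwa [hmeasure, hmeasure] at hle

end Inference

section Converse

lemma exists_eq_closedBall_of_linearIsometryEquiv_invariant {V : Type*} [NormedAddCommGroup V]
    [InnerProductSpace ℝ V] [Nontrivial V] {Y : Set V} (hc : IsCompact Y) (hconv : Convex ℝ Y)
    (hne : Y.Nonempty) (hinv : ∀ g : V ≃ₗᵢ[ℝ] V, g '' Y = Y) : ∃ r, Y = closedBall 0 r := by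
  obtain ⟨y, hy, hmax⟩ := hc.exists_isMaxOn hne continuous_norm.continuousOn
  refine ⟨‖y‖, Subset.antisymm (fun x hx => mem_closedBall_zero_iff.2 (hmax hx)) ?_⟩
  rw [← convexHull_sphere_eq_closedBall _ (norm_nonneg y)]
  refine convexHull_min (fun x hx => ?_) hconv
  rw [← hinv (Submodule.reflection (Submodule.span ℝ {y - x})ᗮ)]
  exact ⟨y, hy, Submodule.reflection_sub (mem_sphere_zero_iff_norm.1 hx).symm⟩

/-- By dimension, `M` restricts to an affine isomorphism from the hyperplane `f = 1` onto `V`. -/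
lemma exists_affineMap_image_image_eq {k E V : Type*} [Field k] [AddCommGroup E] [Module k E]
    [AddCommGroup V] [Module k V] {f : E →ₗ[k] k} {K : Set E} (hf : ∀ x ∈ K, f x = 1)
    {M : E →ₗ[k] V} (hspan : affineSpan k (M '' K) = ⊤)
    (hdim : Module.finrank k E = Module.finrank k V + 1) :
    ∃ F : V →ᵃ[k] E, Function.Injective F ∧ F '' (M '' K) = K := by
  have hslice : ∀ v, ∃ x, M x = v ∧ f x = 1 := by
    intro v
    have hmap : (affineSpan k K).map M.toAffineMap = ⊤ :=
      (AffineSubspace.map_span M.toAffineMap K).trans hspan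
    obtain ⟨x, hx, rfl⟩ : v ∈ (affineSpan k K).map M.toAffineMap := by
      simp only [hmap, AffineSubspace.mem_top]
    exact ⟨x, rfl, AffineMap.eqOn_affineSpan (f := f.toAffineMap) (g := .const k E 1) hf hx⟩
  have hsurj : Function.Surjective (M.prod f) := by
    rintro ⟨v, t⟩
    obtain ⟨x, hMx, hfx⟩ := hslice v
    obtain ⟨x₀, hMx₀, hfx₀⟩ := hslice 0
    exact ⟨x + (t - 1) • x₀, by simp [hMx, hfx, hMx₀, hfx₀]⟩
  have : FiniteDimensional k E := .of_finrank_pos (by omega)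
  have : FiniteDimensional k V := .of_surjective M fun v => (hslice v).imp fun _ h => h.1
  have hinj : Function.Injective (M.prod f) :=
    (LinearMap.injective_iff_surjective_of_finrank_eq_finrank (by simp [hdim])).2 hsurj
  let e : E ≃ₗ[k] V × k := .ofBijective (M.prod f) ⟨hinj, hsurj⟩
  refine ⟨e.symm.toLinearMap.toAffineMap.comp ((AffineMap.id k V).prod (AffineMap.const k V 1)),
    e.symm.injective.comp (Prod.mk_left_injective 1), ?_⟩
  refine LeftInvOn.image_image fun x hx => ?_
  change e.symm (M x, 1) = x
  rw [← hf x hx]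
  exact e.symm_apply_apply x

lemma linearIsometryEquiv_image_mem_ddi {ℓ n : ℕ} {𝕊 : Set (Euc ℓ)} {X R : Set (Euc n)}
    (hR : R ∈ ddi X 𝕊) {g : Euc n ≃ₗᵢ[ℝ] Euc n} (hg : g '' X = X) : g '' R ∈ ddi X 𝕊 := by
  obtain ⟨⟨⟨M, rfl⟩, hX, hspan⟩, hmin⟩ := hR
  have hg_span : g '' (affineSpan ℝ X : Set (Euc n)) = affineSpan ℝ X := by
    simpa [hg] using
      congrArg SetLike.coe (AffineSubspace.map_span g.toLinearMap.toAffineMap X)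
  refine ⟨⟨⟨g.toLinearMap ∘ₗ M, image_image g M 𝕊⟩, ?_, ?_⟩, fun R' hR' => ?_⟩
  · exact hg.ge.trans (image_mono hX)
  · exact (image_mono hspan).trans hg_span.le
  · rw [g.isometry.hausdorffMeasure_image (Or.inr g.surjective)]
    exact hmin R' hR'

lemma IsHyperEllipsoid.of_image_closedBall {ℓ : ℕ} {F : Euc (ℓ - 1) →ᵃ[ℝ] Euc ℓ}
    (hF : Function.Injective F) {r : ℝ} (hr : 0 < r) : IsHyperEllipsoid (F '' closedBall 0 r) := by
  refine ⟨F.comp (r • LinearMap.id (R := ℝ)).toAffineMap,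
    hF.comp (smul_right_injective _ hr.ne'), ?_⟩
  rw [AffineMap.coe_comp, image_comp]
  congr 1
  change _ = (r • ·) '' _
  rw [image_smul, smul_unitClosedBall_of_nonneg hr.le]

theorem isHyperEllipsoid_of_ddi_closedBall_eq_singleton {ℓ : ℕ} (hℓ : 2 ≤ ℓ) {𝕊 : Set (Euc ℓ)}
    (hS : IsStateSpace 𝕊) {Y : Set (Euc (ℓ - 1))} (hY : ddi (closedBall 0 1) 𝕊 = {Y}) :
    IsHyperEllipsoid 𝕊 := by
  obtain ⟨hScomp, hSconv, f, -, hf⟩ := hS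
  have hYmem : Y ∈ ddi (closedBall 0 1) 𝕊 := hY ▸ mem_singleton Y
  have hinv : ∀ g : Euc (ℓ - 1) ≃ₗᵢ[ℝ] Euc (ℓ - 1), g '' Y = Y := fun g =>
    mem_singleton_iff.1 (hY ▸ linearIsometryEquiv_image_mem_ddi hYmem (g := g) (by simp))
  obtain ⟨⟨⟨M, rfl⟩, hball, -⟩, -⟩ := hYmem
  have : Nonempty (Fin (ℓ - 1)) := ⟨⟨0, by omega⟩⟩
  obtain ⟨r, hr⟩ := exists_eq_closedBall_of_linearIsometryEquiv_invariant
    (hScomp.image M.continuous_of_finiteDimensional) (hSconv.linear_image M)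
    ⟨0, hball (mem_closedBall_self zero_le_one)⟩ hinv
  have hr_pos : 0 < r := by
    obtain ⟨v, hv⟩ := exists_norm_eq (Euc (ℓ - 1)) zero_le_one
    have hvr := hr ▸ hball (mem_closedBall_zero_iff.2 hv.le)
    rw [mem_closedBall_zero_iff, hv] at hvr
    exact one_pos.trans_le hvr
  have hfS : ∀ x ∈ 𝕊, f x = 1 := fun x hx => hf.subset (subset_affineSpan ℝ 𝕊 hx)
  obtain ⟨F, hF, hF_image⟩ := exists_affineMap_image_image_eq hfS (M := M)
    (hr ▸ affineSpan_closedBall_eq_top 0 hr_pos) (by simp; omega)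
  rw [← hF_image, hr]
  exact .of_image_closedBall hF hr_pos

end Converse

theorem stmt_0 {ℓ : ℕ} (hℓ : 2 ≤ ℓ) (𝕊 : Set (Euc ℓ)) (hS : IsStateSpace 𝕊) :
    (∀ (n : ℕ) (X : Set (Euc n)), X.Nonempty → Bornology.IsBounded X →
        Module.finrank ℝ (affineSpan ℝ X).direction ≤ ℓ - 1 →
        ∃ Y : Set (Euc n), ddi X 𝕊 = {Y}) ↔
      IsHyperEllipsoid 𝕊 := by
  constructor
  · intro h
    obtain ⟨Y, hY⟩ := h (ℓ - 1) (closedBall 0 1) ⟨0, mem_closedBall_self zero_le_one⟩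
      isBounded_closedBall ((Submodule.finrank_le _).trans_eq finrank_euclideanSpace_fin)
    exact isHyperEllipsoid_of_ddi_closedBall_eq_singleton hℓ hS hY
  · rintro ⟨F, hF, rfl⟩ n X hne hX hd
    obtain ⟨-, -, f, -, hf⟩ := hS
    have hfF : f.toAffineMap.comp F = .const ℝ _ 1 :=
      AffineMap.ext_on (affineSpan_closedBall_eq_top 0 one_pos) fun y hy =>
        hf.subset (subset_affineSpan ℝ _ (mem_image_of_mem F hy))
    exact exists_ddi_image_closedBall_eq_singleton hF (AffineMap.congr_fun hfF) hne hX hd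
end
end

section
/- Let ℓ ≥ 2 and let the state space 𝕊 ⊆ ℝ^ℓ be an (ℓ−1)-dimensional Euclidean ball, namely 𝕊 = {a ∈ H : ‖a − c‖ ≤ r} for an affine hyperplane H with 0 ∉ H, a center c ∈ H, and radius r > 0. For a finite nonempty set S ⊆ 𝕊 the following are equivalent: (i) S is the vertex set of a regular (ℓ−1)-simplex inscribed in the boundary sphere of 𝕊, i.e., S consists of ℓ points of {a ∈ H : ‖a − c‖ = r} with all pairwise distances equal and whose affine span is H; (ii) ddi(S | 𝕊) = {𝕊}, and every subset S′ ⊆ 𝕊 with ddi(S′ | 𝕊) = {𝕊} has cardinality at least the cardinality of S. -/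
open MeasureTheory Metric Set

noncomputable section

open scoped InnerProductSpace

/-!
The vectors `u i` from the center of a ball to the vertices of an inscribed regular simplex sum to
zero and satisfy `∑ ⟪u i, x⟫ u i = K x`. Hence `∑ ‖T (u i) + b‖² = K tr (Tᵀ T) + ℓ ‖b‖²` for every
affine map `x ↦ T x + b`. If that map sends the vertices back into the ball, then
`tr (Tᵀ T) ≤ dim`, so AM-GM for the eigenvalues of `Tᵀ T` gives `|det T| ≤ 1`, with equality only if
`T` is an isometry and `b = 0`. Applied to the inverse of a map whose image of the ball contains the
simplex, this says that the ball is the unique ellipsoid of least volume around the simplex.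

Conversely, an affinely spanning set needs `ℓ` points. If `S` has exactly `ℓ` points and
`ddi(S | 𝕊) = {𝕊}`, send the vertices of a regular simplex to `S` by a linear map `M`. Then
`|det M| ≤ 1`, so `M '' 𝕊` is an admissible set of least volume and equals `𝕊`; the equality case
makes `M` an isometry of the hyperplane, and `S` is a regular simplex.
-/

section ProductBound

variable {ι : Type*} [Fintype ι] {x : ι → ℝ}

theorem prod_le_one_of_sum_le_card (hx : ∀ i, 0 ≤ x i) (hsum : ∑ i, x i ≤ Fintype.card ι) :
    ∏ i, x i ≤ 1 :=
  calc ∏ i, x i ≤ ∏ i, Real.exp (x i - 1) :=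
        Finset.prod_le_prod (fun i _ => hx i) fun i _ => by linarith [Real.add_one_le_exp (x i - 1)]
    _ = Real.exp (∑ i, x i - Fintype.card ι) := by simp [← Real.exp_sum]
    _ ≤ 1 := Real.exp_le_one_iff.2 (sub_nonpos.2 hsum)

theorem eq_one_of_sum_le_card_of_one_le_prod (hx : ∀ i, 0 ≤ x i)
    (hsum : ∑ i, x i ≤ Fintype.card ι) (hprod : 1 ≤ ∏ i, x i) (j : ι) : x j = 1 := by
  by_contra hj
  have hpos (i : ι) : 0 < x i := (hx i).lt_of_ne' fun h =>
    (one_pos.trans_le hprod).ne' (Finset.prod_eq_zero (Finset.mem_univ i) h)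
  have hlt : ∏ i, x i < 1 :=
    calc ∏ i, x i < ∏ i, Real.exp (x i - 1) :=
          Finset.prod_lt_prod (fun i _ => hpos i)
            (fun i _ => by linarith [Real.add_one_le_exp (x i - 1)])
            ⟨j, Finset.mem_univ j, by linarith [Real.add_one_lt_exp (sub_ne_zero.2 hj)]⟩
      _ = Real.exp (∑ i, x i - Fintype.card ι) := by simp [← Real.exp_sum]
      _ ≤ 1 := Real.exp_le_one_iff.2 (sub_nonpos.2 hsum)
  exact hlt.not_ge hprod

end ProductBound

section PositiveOperator

variable {V : Type*} [NormedAddCommGroup V] [InnerProductSpace ℝ V] [FiniteDimensional ℝ V]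
  {A : V →ₗ[ℝ] V}

theorem det_le_one_of_isPositive_of_trace_le_finrank (hA : A.IsPositive)
    (htr : LinearMap.trace ℝ V A ≤ Module.finrank ℝ V) : A.det ≤ 1 := by
  rw [hA.isSymmetric.trace_eq_sum_eigenvalues rfl] at htr
  rw [hA.isSymmetric.det_eq_prod_eigenvalues rfl]
  exact prod_le_one_of_sum_le_card (hA.nonneg_eigenvalues rfl) (by simpa using htr)

theorem eq_id_of_isPositive_of_trace_le_finrank (hA : A.IsPositive)
    (htr : LinearMap.trace ℝ V A ≤ Module.finrank ℝ V) (hdet : 1 ≤ A.det) :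
    A = LinearMap.id := by
  rw [hA.isSymmetric.trace_eq_sum_eigenvalues rfl] at htr
  rw [hA.isSymmetric.det_eq_prod_eigenvalues rfl] at hdet
  have hone := eq_one_of_sum_le_card_of_one_le_prod (hA.nonneg_eigenvalues rfl)
    (by simpa using htr) hdet
  refine (hA.isSymmetric.eigenvectorBasis rfl).toBasis.ext fun k => ?_
  rw [OrthonormalBasis.coe_toBasis, hA.isSymmetric.apply_eigenvectorBasis, hone]
  simp

theorem det_adjoint_comp_self (T : V →ₗ[ℝ] V) : (T.adjoint ∘ₗ T).det = T.det ^ 2 := by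
  rw [← sq_abs, ← T.normDet_eq_abs_det]
  exact T.normDet_sq.symm

end PositiveOperator

section BalancedTightFrame

variable {ι V : Type*} [Fintype ι] [NormedAddCommGroup V] [InnerProductSpace ℝ V]

/-- Vectors with centroid `0` whose frame operator `∑ i, ⟪u i, ·⟫ u i` is the scalar `K`. -/
structure IsBalancedTightFrame (K : ℝ) (u : ι → V) : Prop where
  sum_eq_zero : ∑ i, u i = 0
  sum_inner_smul : ∀ x, ∑ i, ⟪u i, x⟫_ℝ • u i = K • x

namespace IsBalancedTightFrame

variable [FiniteDimensional ℝ V] {K : ℝ} {u : ι → V}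

theorem sum_inner_map_self (hu : IsBalancedTightFrame K u) (A : V →ₗ[ℝ] V) :
    ∑ i, ⟪u i, A (u i)⟫_ℝ = K * LinearMap.trace ℝ V A := by
  let e := stdOrthonormalBasis ℝ V
  calc ∑ i, ⟪u i, A (u i)⟫_ℝ
      = ∑ i, ∑ k, ⟪u i, e k⟫_ℝ * ⟪e k, A (u i)⟫_ℝ := by simp only [e.sum_inner_mul_inner]
    _ = ∑ k, ⟪e k, A (∑ i, ⟪u i, e k⟫_ℝ • u i)⟫_ℝ := by
        rw [Finset.sum_comm]
        simp only [map_sum, map_smul, inner_sum, inner_smul_right]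
    _ = K * LinearMap.trace ℝ V A := by
        simp only [hu.sum_inner_smul, map_smul, inner_smul_right, ← Finset.mul_sum,
          A.trace_eq_sum_inner e]

theorem sum_norm_map_add_sq (hu : IsBalancedTightFrame K u) (T : V →ₗ[ℝ] V) (b : V) :
    ∑ i, ‖T (u i) + b‖ ^ 2 =
      K * LinearMap.trace ℝ V (T.adjoint ∘ₗ T) + Fintype.card ι * ‖b‖ ^ 2 := by
  have hcross : ∑ i, ⟪T (u i), b⟫_ℝ = 0 := by
    rw [← sum_inner, ← map_sum, hu.sum_eq_zero, map_zero, inner_zero_left]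
  simp only [norm_add_sq_real, Finset.sum_add_distrib, ← Finset.mul_sum, hcross, mul_zero,
    add_zero, ← hu.sum_inner_map_self, LinearMap.comp_apply, LinearMap.adjoint_inner_right,
    real_inner_self_eq_norm_sq, Finset.sum_const, Finset.card_univ, nsmul_eq_mul]

theorem sum_norm_sq (hu : IsBalancedTightFrame K u) :
    ∑ i, ‖u i‖ ^ 2 = K * Module.finrank ℝ V := by
  simpa using hu.sum_inner_map_self LinearMap.id

theorem pos (hu : IsBalancedTightFrame K u) {i : ι} (hi : u i ≠ 0) : 0 < K := by
  have h : 0 < ∑ j, ‖u j‖ ^ 2 :=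
    Finset.sum_pos' (fun _ _ => by positivity) ⟨i, Finset.mem_univ i, by positivity⟩
  rw [hu.sum_norm_sq] at h
  exact pos_of_mul_pos_left h (by positivity)

variable {T : V →ₗ[ℝ] V} {b : V}

theorem trace_adjoint_comp_self_le (hu : IsBalancedTightFrame K u) (hK : 0 < K)
    (hle : ∑ i, ‖T (u i) + b‖ ^ 2 ≤ ∑ i, ‖u i‖ ^ 2) :
    LinearMap.trace ℝ V (T.adjoint ∘ₗ T) ≤ Module.finrank ℝ V := by
  rw [hu.sum_norm_map_add_sq, hu.sum_norm_sq] at hle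
  refine le_of_mul_le_mul_left ?_ hK
  linarith [show 0 ≤ Fintype.card ι * ‖b‖ ^ 2 by positivity]

theorem abs_det_le_one (hu : IsBalancedTightFrame K u) (hK : 0 < K)
    (hle : ∑ i, ‖T (u i) + b‖ ^ 2 ≤ ∑ i, ‖u i‖ ^ 2) : |T.det| ≤ 1 := by
  rw [← sq_le_one_iff_abs_le_one, ← det_adjoint_comp_self]
  exact det_le_one_of_isPositive_of_trace_le_finrank T.isPositive_adjoint_comp_self
    (hu.trace_adjoint_comp_self_le hK hle)

theorem adjoint_comp_self_eq_id (hu : IsBalancedTightFrame K u) (hK : 0 < K)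
    (hle : ∑ i, ‖T (u i) + b‖ ^ 2 ≤ ∑ i, ‖u i‖ ^ 2) (hdet : 1 ≤ |T.det|) :
    T.adjoint ∘ₗ T = LinearMap.id := by
  refine eq_id_of_isPositive_of_trace_le_finrank T.isPositive_adjoint_comp_self
    (hu.trace_adjoint_comp_self_le hK hle) ?_
  rwa [det_adjoint_comp_self, one_le_sq_iff_one_le_abs]

theorem norm_map (hu : IsBalancedTightFrame K u) (hK : 0 < K)
    (hle : ∑ i, ‖T (u i) + b‖ ^ 2 ≤ ∑ i, ‖u i‖ ^ 2) (hdet : 1 ≤ |T.det|) (x : V) :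
    ‖T x‖ = ‖x‖ := by
  rw [← sq_eq_sq₀ (norm_nonneg _) (norm_nonneg _), ← real_inner_self_eq_norm_sq,
    ← LinearMap.adjoint_inner_right, ← LinearMap.comp_apply,
    hu.adjoint_comp_self_eq_id hK hle hdet, LinearMap.id_apply, real_inner_self_eq_norm_sq]

theorem translation_eq_zero [Nonempty ι] (hu : IsBalancedTightFrame K u) (hK : 0 < K)
    (hle : ∑ i, ‖T (u i) + b‖ ^ 2 ≤ ∑ i, ‖u i‖ ^ 2) (hdet : 1 ≤ |T.det|) : b = 0 := by
  have hid := hu.adjoint_comp_self_eq_id hK hle hdet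
  rw [hu.sum_norm_map_add_sq, hu.sum_norm_sq, hid, LinearMap.trace_id] at hle
  have hb : Fintype.card ι * ‖b‖ ^ 2 ≤ 0 := by linarith
  have hcard : (0 : ℝ) < Fintype.card ι := by exact_mod_cast Fintype.card_pos
  simpa using nonpos_of_mul_nonpos_right hb hcard

end IsBalancedTightFrame

/-- Since `⟪u i, u j⟫` is `r ^ 2 - δ ^ 2 / 2` off the diagonal and `r ^ 2` on it, the frame operator
multiplies every difference `u j - u k` by `δ ^ 2 / 2`. -/
theorem isBalancedTightFrame_of_equidistant [Nonempty ι] {u : ι → V} {r δ : ℝ}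
    (hnorm : ∀ i, ‖u i‖ = r) (hdist : Pairwise fun i j => dist (u i) (u j) = δ)
    (hspan : vectorSpan ℝ (range u) = ⊤) : IsBalancedTightFrame (δ ^ 2 / 2) u := by
  classical
  obtain ⟨i₀⟩ := ‹Nonempty ι›
  simp only [vectorSpan_range_eq_span_range_vsub_right ℝ u i₀, vsub_eq_sub] at hspan
  have hinner (i j : ι) : ⟪u i, u j⟫_ℝ = r ^ 2 - δ ^ 2 / 2 + if i = j then δ ^ 2 / 2 else 0 := by
    split_ifs with hij
    · rw [hij, real_inner_self_eq_norm_sq, hnorm]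
      ring
    · have := norm_sub_sq_real (u i) (u j)
      rw [← dist_eq_norm, hdist hij, hnorm, hnorm] at this
      linarith
  have hdiff (i j : ι) : ⟪u i, u j - u i₀⟫_ℝ =
      (if i = j then δ ^ 2 / 2 else 0) - if i = i₀ then δ ^ 2 / 2 else 0 := by
    rw [inner_sub_right, hinner, hinner]
    ring
  constructor
  · have h : innerₛₗ ℝ (∑ i, u i) = 0 := LinearMap.ext_on_range hspan fun j => by
      simp only [innerₛₗ_apply_apply, sum_inner, hdiff]
      simp
    exact inner_self_eq_zero.1 (LinearMap.congr_fun h (∑ i, u i))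
  · have h : ∑ i, (innerₛₗ ℝ (u i)).smulRight (u i) = (δ ^ 2 / 2) • LinearMap.id :=
      LinearMap.ext_on_range hspan fun j => by
        simp only [LinearMap.sum_apply, LinearMap.smulRight_apply, innerₛₗ_apply_apply, hdiff]
        simp [sub_smul, smul_sub, ite_smul]
    intro x
    simpa using LinearMap.congr_fun h x

end BalancedTightFrame

section Hyperplane

variable {k E : Type*} [Field k] [AddCommGroup E] [Module k E] {f : E →ₗ[k] k} {c : E} {X : Set E}

theorem coe_mk'_ker (hc : f c = 1) :
    (AffineSubspace.mk' c (LinearMap.ker f) : Set E) = {x | f x = 1} := by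
  ext x
  simp [hc, sub_eq_zero]

theorem affineSpan_subset_hyperplane (hc : f c = 1) (hX : X ⊆ {x | f x = 1}) :
    (affineSpan k X : Set E) ⊆ {x | f x = 1} := by
  rw [← coe_mk'_ker hc] at hX ⊢
  exact affineSpan_le.2 hX

theorem direction_affineSpan_eq_ker (hc : f c = 1)
    (hX : (affineSpan k X : Set E) = {x | f x = 1}) :
    (affineSpan k X).direction = LinearMap.ker f := by
  rw [← coe_mk'_ker hc] at hX
  rw [SetLike.coe_injective hX, AffineSubspace.direction_mk']

theorem span_eq_top_of_affineSpan_eq (hc : f c = 1)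
    (hX : (affineSpan k X : Set E) = {x | f x = 1}) : Submodule.span k X = ⊤ := by
  have hsub : {x | f x = 1} ⊆ (Submodule.span k X : Set E) := hX ▸ affineSpan_subset_span
  refine eq_top_iff.2 fun x _ => ?_
  rw [show x = (f x - 1) • c + (x - (f x - 1) • c) by abel]
  exact add_mem (Submodule.smul_mem _ _ (hsub hc)) (hsub (by simp [hc]))

theorem affineSpan_eq_of_span_eq_top (hX : X ⊆ {x | f x = 1}) (hne : X.Nonempty)
    (hspan : Submodule.span k X = ⊤) : (affineSpan k X : Set E) = {x | f x = 1} := by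
  obtain ⟨p, hp⟩ := hne
  have hproj : Submodule.span k X ≤
      (vectorSpan k X).comap (LinearMap.id - f.smulRight p) := Submodule.span_le.2 fun x hx => by
    have hfx : f x = 1 := hX hx
    simpa [hfx] using vsub_mem_vectorSpan k hx hp
  refine (affineSpan_subset_hyperplane (hX hp) hX).antisymm fun x hx => ?_
  have hxp : x - p ∈ vectorSpan k X := by
    simpa [mem_ofPred.1 hx] using hproj (hspan ▸ Submodule.mem_top : x ∈ Submodule.span k X)
  simpa using vadd_mem_affineSpan_of_mem_affineSpan_of_mem_vectorSpan
    (subset_affineSpan k X hp) hxp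

theorem span_range_add_smul_sub_eq_top {ι : Type*} {v : ι → E} {m : E} {t : k}
    (hspan : Submodule.span k (range v) = ⊤) (hv : ∀ i, f (v i) = f m) (hm : f m ≠ 0) (hc : f c = 1)
    (ht : t ≠ 0) :
    Submodule.span k (range fun i => c + t • (v i - m)) = ⊤ := by
  let L : E →ₗ[k] E := t • LinearMap.id + (f m)⁻¹ • f.smulRight (c - t • m)
  have hLv : ∀ i, L (v i) = c + t • (v i - m) := fun i => by
    simp only [L, LinearMap.add_apply, LinearMap.smul_apply, LinearMap.id_apply,
      LinearMap.smulRight_apply, hv, inv_smul_smul₀ hm]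
    module
  have hL : Function.Surjective L := fun y => by
    let x := t⁻¹ • (y - f y • (c - t • m))
    have hfx : f x = f m * f y := by
      simp only [x, map_smul, map_sub, smul_eq_mul, hc]
      field_simp
      ring
    refine ⟨x, ?_⟩
    simp only [L, LinearMap.add_apply, LinearMap.smul_apply, LinearMap.id_apply,
      LinearMap.smulRight_apply, hfx, mul_smul, inv_smul_smul₀ hm]
    simp [x, ht]
  rw [← LinearMap.range_eq_top.2 hL, ← Submodule.map_top, ← hspan, Submodule.map_span, ← range_comp]
  simp [Function.comp_def, hLv]

/-- The restriction to `ker f` of a linear map `M` with `f ∘ M = f`, i.e. the linear part of the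
affine self-map of the hyperplane `f = 1` induced by `M`. -/
def kerRestrict {M : E →ₗ[k] E} (hM : f ∘ₗ M = f) : LinearMap.ker f →ₗ[k] LinearMap.ker f :=
  M.restrict fun x hx => by
    rw [LinearMap.mem_ker] at hx ⊢
    rw [← LinearMap.comp_apply, hM, hx]

@[simp]
theorem coe_kerRestrict_apply {M : E →ₗ[k] E} (hM : f ∘ₗ M = f) (x : LinearMap.ker f) :
    (kerRestrict hM x : E) = M x :=
  rfl

theorem det_kerRestrict [FiniteDimensional k E] {M : E →ₗ[k] E} (hM : f ∘ₗ M = f) :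
    (kerRestrict hM).det = M.det := by
  have hle : LinearMap.ker f ≤ (LinearMap.ker f).comap M := fun x hx => by
    simpa [← LinearMap.comp_apply, hM] using hx
  have hquot : (LinearMap.ker f).mapQ (LinearMap.ker f) M hle = LinearMap.id := by
    ext x
    rw [LinearMap.comp_apply, LinearMap.comp_apply, Submodule.mkQ_apply, Submodule.mapQ_apply,
      LinearMap.id_apply, Submodule.Quotient.eq, LinearMap.mem_ker, map_sub,
      ← LinearMap.comp_apply, hM, sub_self]
  rw [LinearMap.det_eq_det_mul_det (LinearMap.ker f) M hle, hquot, LinearMap.det_id, mul_one]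
  rfl

end Hyperplane

section HyperBall

variable {E : Type*} [NormedAddCommGroup E] [NormedSpace ℝ E] {f : E →ₗ[ℝ] ℝ} {c : E} {r : ℝ}

/-- The ball of radius `r` around `c` in the affine hyperplane `f = 1`. -/
def hyperBall (f : E →ₗ[ℝ] ℝ) (c : E) (r : ℝ) : Set E :=
  {a | f a = 1 ∧ ‖a - c‖ ≤ r}

theorem hyperBall_subset_hyperplane : hyperBall f c r ⊆ {x | f x = 1} := fun _ hx => hx.1

theorem affineSpan_hyperBall (hc : f c = 1) (hr : 0 < r) :
    (affineSpan ℝ (hyperBall f c r) : Set E) = {x | f x = 1} := by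
  refine (affineSpan_subset_hyperplane hc hyperBall_subset_hyperplane).antisymm fun x hx => ?_
  have hden : 0 < ‖x - c‖ + r := by positivity
  set t := r / (‖x - c‖ + r) with ht
  have htpos : 0 < t := by positivity
  have hcB : c ∈ hyperBall f c r := ⟨hc, by simpa using hr.le⟩
  have hpB : c + t • (x - c) ∈ hyperBall f c r := by
    refine ⟨by simp [hc, mem_ofPred.1 hx], ?_⟩
    rw [add_sub_cancel_left, norm_smul, Real.norm_of_nonneg htpos.le, ht, div_mul_eq_mul_div,
      div_le_iff₀ hden]
    gcongr
    linarith
  have hline := AffineMap.lineMap_mem t⁻¹ (subset_affineSpan ℝ _ hcB) (subset_affineSpan ℝ _ hpB)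
  rwa [AffineMap.lineMap_apply, vsub_eq_sub, vadd_eq_add, add_sub_cancel_left,
    inv_smul_smul₀ htpos.ne', sub_add_cancel] at hline

theorem span_hyperBall (hc : f c = 1) (hr : 0 < r) :
    Submodule.span ℝ (hyperBall f c r) = ⊤ :=
  span_eq_top_of_affineSpan_eq hc (affineSpan_hyperBall hc hr)

theorem hyperBall_eq_image_closedBall (hc : f c = 1) :
    hyperBall f c r = (fun x : LinearMap.ker f => c + (x : E)) '' closedBall 0 r := by
  ext a
  constructor
  · rintro ⟨ha, har⟩
    exact ⟨⟨a - c, by simp [ha, hc]⟩, by simpa using har, by simp⟩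
  · rintro ⟨x, hx, rfl⟩
    exact ⟨by simp [hc], by simpa using hx⟩

theorem isometry_add_ker (p : E) : Isometry fun x : LinearMap.ker f => p + (x : E) :=
  (isometry_add_left p).comp isometry_subtype_coe

variable [MeasurableSpace E] [BorelSpace E]

theorem hausdorffMeasure_hyperBall (hc : f c = 1) {d : ℝ} (hd : 0 ≤ d) :
    μH[d] (hyperBall f c r) = μH[d] (closedBall (0 : LinearMap.ker f) r) := by
  rw [hyperBall_eq_image_closedBall hc, (isometry_add_ker c).hausdorffMeasure_image (Or.inl hd)]

variable [FiniteDimensional ℝ E]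

theorem hausdorffMeasure_image_hyperBall (hc : f c = 1) {M : E →ₗ[ℝ] E} (hM : f ∘ₗ M = f) :
    μH[Module.finrank ℝ (LinearMap.ker f)] (M '' hyperBall f c r) =
      ENNReal.ofReal |M.det| * μH[Module.finrank ℝ (LinearMap.ker f)] (hyperBall f c r) := by
  have himage : M '' hyperBall f c r =
      (fun x : LinearMap.ker f => M c + (x : E)) '' (kerRestrict hM '' closedBall 0 r) := by
    simp only [hyperBall_eq_image_closedBall hc, image_image, map_add, coe_kerRestrict_apply]
  rw [himage, (isometry_add_ker _).hausdorffMeasure_image (Or.inl (Nat.cast_nonneg _)),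
    Measure.addHaar_image_linearMap, det_kerRestrict,
    hausdorffMeasure_hyperBall hc (Nat.cast_nonneg _)]

theorem hausdorffMeasure_hyperBall_ne_zero (hc : f c = 1) (hr : 0 < r) :
    μH[Module.finrank ℝ (LinearMap.ker f)] (hyperBall f c r) ≠ 0 := by
  rw [hausdorffMeasure_hyperBall hc (Nat.cast_nonneg _)]
  exact (measure_closedBall_pos _ _ hr).ne'

theorem hausdorffMeasure_hyperBall_ne_top (hc : f c = 1) :
    μH[Module.finrank ℝ (LinearMap.ker f)] (hyperBall f c r) ≠ ⊤ := by
  rw [hausdorffMeasure_hyperBall hc (Nat.cast_nonneg _)]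
  exact (isCompact_closedBall _ _).measure_ne_top

theorem hausdorffMeasure_image_hyperBall_le_iff (hc : f c = 1) (hr : 0 < r) {M : E →ₗ[ℝ] E}
    (hM : f ∘ₗ M = f) :
    μH[Module.finrank ℝ (LinearMap.ker f)] (M '' hyperBall f c r) ≤
      μH[Module.finrank ℝ (LinearMap.ker f)] (hyperBall f c r) ↔ |M.det| ≤ 1 := by
  rw [hausdorffMeasure_image_hyperBall hc hM]
  nth_rewrite 2 [← one_mul (μH[_] _)]
  rw [ENNReal.mul_le_mul_iff_left (hausdorffMeasure_hyperBall_ne_zero hc hr)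
    (hausdorffMeasure_hyperBall_ne_top hc), ENNReal.ofReal_le_one]

theorem abs_det_eq_one_of_image_hyperBall_eq (hc : f c = 1) (hr : 0 < r) {M : E →ₗ[ℝ] E}
    (hM : f ∘ₗ M = f) (h : M '' hyperBall f c r = hyperBall f c r) : |M.det| = 1 := by
  have hvol := hausdorffMeasure_image_hyperBall (r := r) hc hM
  rw [h, eq_comm, ENNReal.mul_eq_right (hausdorffMeasure_hyperBall_ne_zero hc hr)
    (hausdorffMeasure_hyperBall_ne_top hc)] at hvol
  simpa using hvol

end HyperBall

section RegularSimplex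

variable {ι E : Type*} [NormedAddCommGroup E] [InnerProductSpace ℝ E] {f : E →ₗ[ℝ] ℝ} {c : E}
  {r : ℝ}

/-- The points `s i` are the vertices of a regular simplex that affinely spans the hyperplane
`f = 1` and is inscribed in the sphere of radius `r` around `c`. -/
structure IsInscribedRegularSimplex (f : E →ₗ[ℝ] ℝ) (c : E) (r : ℝ) (s : ι → E) : Prop where
  norm_sub_eq : ∀ i, ‖s i - c‖ = r
  equidistant : ∃ δ, Pairwise fun i j => dist (s i) (s j) = δ
  affineSpan_eq : (affineSpan ℝ (range s) : Set E) = {x | f x = 1}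

theorem isInscribedRegularSimplex_coe_iff {S : Set E} :
    IsInscribedRegularSimplex f c r ((↑) : S → E) ↔
      (∀ a ∈ S, ‖a - c‖ = r) ∧ (∃ δ : ℝ, ∀ a ∈ S, ∀ b ∈ S, a ≠ b → dist a b = δ) ∧
        (affineSpan ℝ S : Set E) = {x | f x = 1} := by
  constructor
  · rintro ⟨hnorm, ⟨δ, hδ⟩, hspan⟩
    exact ⟨fun a ha => hnorm ⟨a, ha⟩, ⟨δ, fun a ha b hb hab => @hδ ⟨a, ha⟩ ⟨b, hb⟩ (by simpa)⟩,
      by rwa [Subtype.range_coe] at hspan⟩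
  · rintro ⟨hnorm, ⟨δ, hδ⟩, hspan⟩
    exact ⟨fun a => hnorm a a.2, ⟨δ, fun a b hab => hδ a a.2 b b.2 (Subtype.coe_ne_coe.2 hab)⟩,
      by rwa [Subtype.range_coe]⟩

namespace IsInscribedRegularSimplex

variable {s : ι → E}

theorem map_eq_one (hs : IsInscribedRegularSimplex f c r s) (i : ι) : f (s i) = 1 :=
  hs.affineSpan_eq.subset (subset_affineSpan ℝ _ (mem_range_self i))

theorem mem_hyperBall (hs : IsInscribedRegularSimplex f c r s) (i : ι) : s i ∈ hyperBall f c r :=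
  ⟨hs.map_eq_one i, (hs.norm_sub_eq i).le⟩

theorem nonempty (hs : IsInscribedRegularSimplex f c r s) (hc : f c = 1) : Nonempty ι := by
  rw [← range_nonempty_iff_nonempty (f := s), ← affineSpan_nonempty (k := ℝ), hs.affineSpan_eq]
  exact ⟨c, hc⟩

theorem span_range_eq_top (hs : IsInscribedRegularSimplex f c r s) (hc : f c = 1) :
    Submodule.span ℝ (range s) = ⊤ :=
  span_eq_top_of_affineSpan_eq hc hs.affineSpan_eq

theorem vectorSpan_eq_top (hs : IsInscribedRegularSimplex f c r s) (hc : f c = 1)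
    {u : ι → LinearMap.ker f} (hu : ∀ i, (u i : E) = s i - c) :
    vectorSpan ℝ (range u) = ⊤ := by
  obtain ⟨i₀⟩ := hs.nonempty hc
  apply Submodule.map_injective_of_injective (LinearMap.ker f).injective_subtype
  calc (vectorSpan ℝ (range u)).map (LinearMap.ker f).subtype
      = vectorSpan ℝ (range s) := by
        rw [vectorSpan_range_eq_span_range_vsub_right ℝ u i₀,
          vectorSpan_range_eq_span_range_vsub_right ℝ s i₀, Submodule.map_span, ← range_comp]
        simp [Function.comp_def, hu]
    _ = (⊤ : Submodule ℝ (LinearMap.ker f)).map (LinearMap.ker f).subtype := by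
        rw [← direction_affineSpan, direction_affineSpan_eq_ker hc hs.affineSpan_eq,
          Submodule.map_top, Submodule.range_subtype]

theorem exists_isBalancedTightFrame [Fintype ι] [FiniteDimensional ℝ E]
    (hs : IsInscribedRegularSimplex f c r s) (hc : f c = 1) (hr : 0 < r) :
    ∃ u : ι → LinearMap.ker f, (∀ i, (u i : E) = s i - c) ∧ ∃ K > 0, IsBalancedTightFrame K u := by
  have hi := hs.nonempty hc
  obtain ⟨δ, hδ⟩ := hs.equidistant
  let u (i : ι) : LinearMap.ker f := ⟨s i - c, by simp [hs.map_eq_one, hc]⟩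
  have hnorm (i : ι) : ‖u i‖ = r := hs.norm_sub_eq i
  have hframe : IsBalancedTightFrame (δ ^ 2 / 2) u :=
    isBalancedTightFrame_of_equidistant hnorm
      (fun i j hij => (dist_sub_right (s i) (s j) c).trans (hδ hij))
      (hs.vectorSpan_eq_top hc fun _ => rfl)
  exact ⟨u, fun _ => rfl, _, hframe.pos (norm_pos_iff.1 (hr.trans_eq (hnorm hi.some).symm)), hframe⟩

variable {N : E →ₗ[ℝ] E}

theorem sum_norm_kerRestrict_add_sq_le [Fintype ι] (hs : IsInscribedRegularSimplex f c r s)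
    (hN : f ∘ₗ N = f) (hmem : ∀ i, N (s i) ∈ hyperBall f c r) {u : ι → LinearMap.ker f}
    (hu : ∀ i, (u i : E) = s i - c) {b : LinearMap.ker f} (hb : (b : E) = N c - c) :
    ∑ i, ‖kerRestrict hN (u i) + b‖ ^ 2 ≤ ∑ i, ‖u i‖ ^ 2 := by
  refine Finset.sum_le_sum fun i _ => pow_le_pow_left₀ (norm_nonneg _) ?_ 2
  rw [Submodule.coe_norm, Submodule.coe_norm, Submodule.coe_add, coe_kerRestrict_apply, hu, hb,
    map_sub, sub_add_sub_cancel, hs.norm_sub_eq]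
  exact (hmem i).2

variable [Finite ι] [FiniteDimensional ℝ E]

theorem abs_det_le_one (hs : IsInscribedRegularSimplex f c r s) (hc : f c = 1) (hr : 0 < r)
    (hN : f ∘ₗ N = f) (hmem : ∀ i, N (s i) ∈ hyperBall f c r) : |N.det| ≤ 1 := by
  have := Fintype.ofFinite ι
  obtain ⟨u, hu, K, hK, hframe⟩ := hs.exists_isBalancedTightFrame hc hr
  rw [← det_kerRestrict hN]
  exact hframe.abs_det_le_one hK (hs.sum_norm_kerRestrict_add_sq_le hN hmem hu
    (b := ⟨N c - c, by simp [← LinearMap.comp_apply, hN]⟩) rfl)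

theorem map_center_and_dist_map (hs : IsInscribedRegularSimplex f c r s) (hc : f c = 1)
    (hr : 0 < r) (hN : f ∘ₗ N = f) (hmem : ∀ i, N (s i) ∈ hyperBall f c r) (hdet : 1 ≤ |N.det|) :
    N c = c ∧ ∀ x y, f x = f y → dist (N x) (N y) = dist x y := by
  have := Fintype.ofFinite ι
  obtain ⟨u, hu, K, hK, hframe⟩ := hs.exists_isBalancedTightFrame hc hr
  have := hs.nonempty hc
  let b : LinearMap.ker f := ⟨N c - c, by simp [← LinearMap.comp_apply, hN]⟩
  have hle := hs.sum_norm_kerRestrict_add_sq_le hN hmem hu (b := b) rfl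
  rw [← det_kerRestrict hN] at hdet
  constructor
  · exact sub_eq_zero.1 (congrArg Subtype.val (hframe.translation_eq_zero hK hle hdet))
  · intro x y hxy
    have hker : x - y ∈ LinearMap.ker f := by simp [hxy]
    rw [dist_eq_norm, dist_eq_norm, ← map_sub]
    exact hframe.norm_map hK hle hdet ⟨x - y, hker⟩

theorem map_mem_hyperBall_iff (hs : IsInscribedRegularSimplex f c r s) (hc : f c = 1)
    (hr : 0 < r) (hN : f ∘ₗ N = f) (hmem : ∀ i, N (s i) ∈ hyperBall f c r) (hdet : 1 ≤ |N.det|)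
    {x : E} : N x ∈ hyperBall f c r ↔ x ∈ hyperBall f c r := by
  obtain ⟨hcenter, hdist⟩ := hs.map_center_and_dist_map hc hr hN hmem hdet
  have hfN : f (N x) = f x := LinearMap.congr_fun hN x
  refine (and_congr_left' (by rw [hfN])).trans (and_congr_right fun hx => ?_)
  rw [← dist_eq_norm, ← dist_eq_norm, ← hdist x c (hx.trans hc.symm), hcenter]

theorem map (hs : IsInscribedRegularSimplex f c r s) (hc : f c = 1) (hr : 0 < r)
    (hN : f ∘ₗ N = f) (hmem : ∀ i, N (s i) ∈ hyperBall f c r) (hdet : 1 ≤ |N.det|) :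
    IsInscribedRegularSimplex f c r (N ∘ s) := by
  obtain ⟨hcenter, hdist⟩ := hs.map_center_and_dist_map hc hr hN hmem hdet
  obtain ⟨δ, hδ⟩ := hs.equidistant
  have := hs.nonempty hc
  have hrange : LinearMap.range N = ⊤ := (LinearMap.isUnit_iff_range_eq_top N).1 <|
    N.isUnit_iff_isUnit_det.2 <| isUnit_iff_ne_zero.2 fun h0 => by norm_num [h0] at hdet
  refine ⟨fun i => ?_, ⟨δ, fun i j hij => ?_⟩,
    affineSpan_eq_of_span_eq_top ?_ (range_nonempty _) ?_⟩
  · rw [← hs.norm_sub_eq i, ← dist_eq_norm, ← dist_eq_norm,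
      ← hdist (s i) c ((hs.map_eq_one i).trans hc.symm), hcenter, Function.comp_apply]
  · exact (hdist _ _ ((hs.map_eq_one i).trans (hs.map_eq_one j).symm)).trans (hδ hij)
  · exact range_subset_iff.2 fun i => (hmem i).1
  · rw [range_comp, ← Submodule.map_span, hs.span_range_eq_top hc, Submodule.map_top, hrange]

end IsInscribedRegularSimplex

theorem exists_orthonormalBasis_forall_map_eq [FiniteDimensional ℝ E] [Fintype ι]
    (hcard : Fintype.card ι = Module.finrank ℝ E) (f : E →ₗ[ℝ] ℝ) :
    ∃ (b : OrthonormalBasis ι ℝ E) (κ : ℝ), ∀ i, f (b i) = κ := by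
  classical
  let e : OrthonormalBasis ι ℝ E := (stdOrthonormalBasis ℝ E).reindex
    (Fintype.equivOfCardEq (by simp [hcard]))
  cases isEmpty_or_nonempty ι with
  | inl h => exact ⟨e, 0, isEmptyElim⟩
  | inr h =>
    let g := (InnerProductSpace.toDual ℝ E).symm f.toContinuousLinearMap
    have hg (x : E) : f x = ⟪g, x⟫_ℝ := by simp [g]
    let σ : E := ∑ i, e i
    have hσe (i : ι) : ⟪σ, e i⟫_ℝ = 1 := by
      simp [σ, sum_inner, e.inner_eq_ite]
    have hσ : ‖σ‖ ≠ 0 := fun h0 => by simpa [norm_eq_zero.1 h0] using hσe h.some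
    let κ := ‖g‖ / ‖σ‖
    -- Reflect `∑ i, e i`, which has the same inner product with every `e i`, onto the line of `g`.
    let R := (ℝ ∙ (κ • σ - g))ᗮ.reflection
    have hR : R (κ • σ) = g := Submodule.reflection_sub (by simp [norm_smul, κ, hσ])
    refine ⟨e.map R, κ, fun i => ?_⟩
    rw [hg, ← hR, OrthonormalBasis.map_apply, R.inner_map_map, real_inner_smul_left, hσe, mul_one]

theorem exists_isInscribedRegularSimplex [FiniteDimensional ℝ E] [Fintype ι] [Nontrivial ι]
    (hcard : Fintype.card ι = Module.finrank ℝ E) (hc : f c = 1) (hr : 0 < r) :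
    ∃ s : ι → E, IsInscribedRegularSimplex f c r s := by
  classical
  obtain ⟨b, κ, hb⟩ := exists_orthonormalBasis_forall_map_eq hcard f
  let m : E := (Fintype.card ι : ℝ)⁻¹ • ∑ i, b i
  have hfm : f m = κ := by simp [m, hb]
  have hκ : κ ≠ 0 := fun h0 => by
    have : f = 0 := b.toBasis.ext fun i => by simp [hb, h0]
    simp [this] at hc
  have hbm (i j : ι) : ‖b i - m‖ = ‖b j - m‖ := by
    rw [← sq_eq_sq₀ (norm_nonneg _) (norm_nonneg _), norm_sub_sq_real, norm_sub_sq_real]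
    simp [m, inner_smul_right, inner_sum, b.inner_eq_ite]
  obtain ⟨i₀⟩ : Nonempty ι := inferInstance
  let ρ := ‖b i₀ - m‖
  have hρ : 0 < ρ := norm_sub_pos_iff.2 fun h0 => by
    obtain ⟨j, hj⟩ := exists_ne i₀
    refine hj (b.toBasis.injective ?_)
    have : ‖b j - m‖ = 0 := by rw [hbm j i₀, h0, sub_self, norm_zero]
    simpa [h0] using sub_eq_zero.1 (norm_eq_zero.1 this)
  have ht : r / ρ ≠ 0 := (div_pos hr hρ).ne'
  refine ⟨fun i => c + (r / ρ) • (b i - m), fun i => ?_, ⟨r / ρ * √2, fun i j hij => ?_⟩, ?_⟩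
  · rw [add_sub_cancel_left, norm_smul, hbm i i₀, Real.norm_of_nonneg (div_pos hr hρ).le,
      div_mul_cancel₀ _ hρ.ne']
  · have hsq : ‖b i - b j‖ ^ 2 = 2 := by
      rw [norm_sub_sq_real, b.inner_eq_zero hij, b.norm_eq_one, b.norm_eq_one]
      norm_num
    beta_reduce
    rw [dist_add_left, dist_smul₀, dist_sub_right, dist_eq_norm,
      Real.norm_of_nonneg (div_pos hr hρ).le, ← hsq, Real.sqrt_sq (norm_nonneg _)]
  · refine affineSpan_eq_of_span_eq_top ?_ (range_nonempty _)
      (span_range_add_smul_sub_eq_top ?_ (fun i => (hb i).trans hfm.symm) (hfm ▸ hκ) hc ht)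
    · rintro _ ⟨i, rfl⟩
      simp [hc, hb, hfm]
    · simpa using b.toBasis.span_eq

end RegularSimplex

section DataDrivenInference

section Singleton

variable {ℓ n : ℕ} {𝕊 : Set (Euc ℓ)} {X R : Set (Euc n)}

theorem subset_of_ddi_eq (h : ddi X 𝕊 = {R}) : X ⊆ R :=
  (h.symm.subset rfl).1.2.1

theorem subset_affineSpan_of_ddi_eq (h : ddi X 𝕊 = {R}) : R ⊆ affineSpan ℝ X :=
  (h.symm.subset rfl).1.2.2

theorem affineSpan_eq_of_ddi_eq (h : ddi X 𝕊 = {R}) : affineSpan ℝ X = affineSpan ℝ R :=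
  (affineSpan_mono ℝ (subset_of_ddi_eq h)).antisymm
    (affineSpan_le.2 (subset_affineSpan_of_ddi_eq h))

theorem natCast_le_mk_of_ddi_eq (hR : Submodule.span ℝ R = ⊤) (h : ddi X 𝕊 = {R}) :
    (n : Cardinal) ≤ Cardinal.mk X := by
  have hspan : Submodule.span ℝ X = ⊤ := top_le_iff.1 <| hR ▸ Submodule.span_le.2
    ((subset_affineSpan_of_ddi_eq h).trans affineSpan_subset_span)
  have hrank := rank_span_le (R := ℝ) X
  rw [hspan, rank_top, rank_eq_card_basis (EuclideanSpace.basisFun (Fin n) ℝ).toBasis,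
    Fintype.card_fin] at hrank
  exact hrank

end Singleton

variable {ℓ : ℕ} {f : Euc ℓ →ₗ[ℝ] ℝ} {c : Euc ℓ} {r : ℝ} {X R : Set (Euc ℓ)}

theorem admissible_hyperBall_iff (hc : f c = 1) (hr : 0 < r)
    (hX : (affineSpan ℝ X : Set (Euc ℓ)) = {x | f x = 1}) :
    Admissible (hyperBall f c r) X R ↔
      ∃ M : Euc ℓ →ₗ[ℝ] Euc ℓ, f ∘ₗ M = f ∧ R = M '' hyperBall f c r ∧ X ⊆ R := by
  rw [Admissible, hX]
  constructor
  · rintro ⟨⟨M, rfl⟩, hXR, hR⟩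
    refine ⟨M, LinearMap.ext_on (span_hyperBall hc hr) fun x hx => ?_, rfl, hXR⟩
    exact (hR (mem_image_of_mem M hx)).trans hx.1.symm
  · rintro ⟨M, hM, rfl, hXR⟩
    refine ⟨⟨M, rfl⟩, hXR, image_subset_iff.2 fun x hx => ?_⟩
    exact (LinearMap.congr_fun hM x).trans hx.1

theorem ddi_hyperBall_eq_singleton_iff (hc : f c = 1) (hr : 0 < r) (hsub : X ⊆ hyperBall f c r)
    (hX : (affineSpan ℝ X : Set (Euc ℓ)) = {x | f x = 1}) :
    ddi X (hyperBall f c r) = {hyperBall f c r} ↔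
      ∀ M : Euc ℓ →ₗ[ℝ] Euc ℓ, f ∘ₗ M = f → X ⊆ M '' hyperBall f c r → |M.det| ≤ 1 →
        M '' hyperBall f c r = hyperBall f c r := by
  have hball : Admissible (hyperBall f c r) X (hyperBall f c r) :=
    (admissible_hyperBall_iff hc hr hX).2 ⟨LinearMap.id, rfl, by simp, hsub⟩
  rw [ddi, direction_affineSpan_eq_ker hc hX]
  constructor
  · intro hddi M hM hXM hdet
    have hmin := (hddi.symm.subset rfl).2
    refine hddi.subset ⟨(admissible_hyperBall_iff hc hr hX).2 ⟨M, hM, rfl, hXM⟩, fun R' hR' => ?_⟩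
    exact ((hausdorffMeasure_image_hyperBall_le_iff hc hr hM).2 hdet).trans (hmin R' hR')
  · intro h
    have heq {R} (hR : Admissible (hyperBall f c r) X R)
        (hle : μH[Module.finrank ℝ (LinearMap.ker f)] R ≤
          μH[Module.finrank ℝ (LinearMap.ker f)] (hyperBall f c r)) : R = hyperBall f c r := by
      obtain ⟨M, hM, rfl, hXM⟩ := (admissible_hyperBall_iff hc hr hX).1 hR
      exact h M hM hXM ((hausdorffMeasure_image_hyperBall_le_iff hc hr hM).1 hle)
    refine Subset.antisymm (fun R hR => heq hR.1 (hR.2 _ hball)) (singleton_subset_iff.2 ?_)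
    exact ⟨hball, fun R hR => le_of_not_gt fun hlt => hlt.ne (by rw [heq hR hlt.le])⟩

variable {ι : Type*} {s : ι → Euc ℓ}

theorem IsInscribedRegularSimplex.ddi_eq [Finite ι] (hs : IsInscribedRegularSimplex f c r s)
    (hc : f c = 1) (hr : 0 < r) : ddi (range s) (hyperBall f c r) = {hyperBall f c r} := by
  refine (ddi_hyperBall_eq_singleton_iff hc hr (range_subset_iff.2 hs.mem_hyperBall)
    hs.affineSpan_eq).2 fun M hM hsub hdet => ?_
  have hsurj : LinearMap.range M = ⊤ := top_le_iff.1 <| by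
    rw [← hs.span_range_eq_top hc, Submodule.span_le]
    exact hsub.trans (image_subset_range _ _)
  let e : Euc ℓ ≃ₗ[ℝ] Euc ℓ := LinearEquiv.ofBijective M
    ⟨LinearMap.injective_iff_surjective.2 (LinearMap.range_eq_top.1 hsurj),
      LinearMap.range_eq_top.1 hsurj⟩
  have hN : f ∘ₗ (e.symm : Euc ℓ →ₗ[ℝ] Euc ℓ) = f := LinearMap.ext fun x => by
    simpa using (LinearMap.congr_fun hM (e.symm x)).symm.trans
      (congrArg f (e.apply_symm_apply x))
  have hmem (i : ι) : e.symm (s i) ∈ hyperBall f c r := by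
    obtain ⟨x, hx, hxi⟩ := hsub (mem_range_self i)
    rwa [← hxi, show M x = e x from rfl, e.symm_apply_apply]
  have hdet' : 1 ≤ |LinearMap.det (e.symm : Euc ℓ →ₗ[ℝ] Euc ℓ)| := by
    have hmul : |M.det| * |LinearMap.det (e.symm : Euc ℓ →ₗ[ℝ] Euc ℓ)| = 1 := by
      rw [← abs_mul, show M = e from rfl, e.det_mul_det_symm, abs_one]
    nlinarith [abs_nonneg (LinearMap.det (e.symm : Euc ℓ →ₗ[ℝ] Euc ℓ))]
  change e '' _ = _
  rw [e.image_eq_preimage_symm]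
  exact ext fun x => hs.map_mem_hyperBall_iff hc hr hN hmem hdet'

theorem IsInscribedRegularSimplex.of_ddi_eq [Fintype ι] [Nontrivial ι]
    (hcard : Fintype.card ι = ℓ) (hc : f c = 1) (hr : 0 < r)
    (hddi : ddi (range s) (hyperBall f c r) = {hyperBall f c r}) :
    IsInscribedRegularSimplex f c r s := by
  have hcard' : Fintype.card ι = Module.finrank ℝ (Euc ℓ) := by simpa using hcard
  obtain ⟨p, hp⟩ := exists_isInscribedRegularSimplex hcard' hc hr
  let b := basisOfTopLeSpanOfCardEqFinrank p (hp.span_range_eq_top hc).ge hcard'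
  let M : Euc ℓ →ₗ[ℝ] Euc ℓ := b.constr ℝ s
  have hMp (i : ι) : M (p i) = s i := by
    have hb : b i = p i := by simp [b]
    rw [← hb, b.constr_basis]
  have hmem (i : ι) : s i ∈ hyperBall f c r := subset_of_ddi_eq hddi (mem_range_self i)
  have hM : f ∘ₗ M = f := LinearMap.ext_on_range (hp.span_range_eq_top hc) fun i => by
    rw [LinearMap.comp_apply, hMp, (hmem i).1, hp.map_eq_one]
  have hMmem (i : ι) : M (p i) ∈ hyperBall f c r := hMp i ▸ hmem i
  have himage : M '' hyperBall f c r = hyperBall f c r :=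
    (ddi_hyperBall_eq_singleton_iff hc hr (subset_of_ddi_eq hddi)
      (by rw [affineSpan_eq_of_ddi_eq hddi, affineSpan_hyperBall hc hr])).1 hddi M hM
      (range_subset_iff.2 fun i => hMp i ▸ mem_image_of_mem M (hp.mem_hyperBall i))
      (hp.abs_det_le_one hc hr hM hMmem)
  rw [show s = M ∘ p from funext fun i => (hMp i).symm]
  exact hp.map hc hr hM hMmem (abs_det_eq_one_of_image_hyperBall_eq hc hr hM himage).ge

end DataDrivenInference

theorem stmt_8_general {ℓ : ℕ} (hℓ : 2 ≤ ℓ) (f : Euc ℓ →ₗ[ℝ] ℝ) (c : Euc ℓ) (hc : f c = 1)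
    (r : ℝ) (hr : 0 < r) (S : Set (Euc ℓ)) :
    (S.ncard = ℓ ∧ (∀ a ∈ S, ‖a - c‖ = r) ∧
      (∃ δ : ℝ, ∀ a ∈ S, ∀ b ∈ S, a ≠ b → dist a b = δ) ∧
      (affineSpan ℝ S : Set (Euc ℓ)) = {x | f x = 1}) ↔
    (ddi S (hyperBall f c r) = {hyperBall f c r} ∧
      ∀ S' ⊆ hyperBall f c r, ddi S' (hyperBall f c r) = {hyperBall f c r} →
        Cardinal.mk S ≤ Cardinal.mk S') := by
  have hncard : S.ncard = ℓ ↔ Cardinal.mk S = ℓ := by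
    rw [← Nat.card_coe_set_eq, Nat.card, Cardinal.toNat_eq_iff (by lia)]
  have hfinite (hcard : Cardinal.mk S = ℓ) : S.Finite :=
    Cardinal.lt_aleph0_iff_set_finite.1 (hcard.trans_lt Cardinal.natCast_lt_aleph0)
  rw [← isInscribedRegularSimplex_coe_iff, hncard]
  constructor
  · rintro ⟨hcard, hS⟩
    have := (hfinite hcard).to_subtype
    refine ⟨by simpa using hS.ddi_eq hc hr, fun S' _ hS' => ?_⟩
    exact hcard.trans_le (natCast_le_mk_of_ddi_eq (span_hyperBall hc hr) hS')
  · rintro ⟨hddi, hmin⟩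
    have : Nontrivial (Fin ℓ) := Fin.nontrivial_iff_two_le.2 hℓ
    obtain ⟨p, hp⟩ := exists_isInscribedRegularSimplex (ι := Fin ℓ) (by simp) hc hr
    have hle : Cardinal.mk S ≤ ℓ :=
      (hmin _ (range_subset_iff.2 hp.mem_hyperBall) (hp.ddi_eq hc hr)).trans
        (by simpa using Cardinal.mk_range_le (f := p))
    have hcard := hle.antisymm (natCast_le_mk_of_ddi_eq (span_hyperBall hc hr) hddi)
    have := (hfinite hcard).fintype
    have hfcard : Fintype.card S = ℓ := by simpa using hcard
    have : Nontrivial S := Fintype.one_lt_card_iff_nontrivial.1 (hℓ.trans_eq hfcard.symm)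
    exact ⟨hcard, .of_ddi_eq hfcard hc hr (by simpa using hddi)⟩

theorem stmt_8 {ℓ : ℕ} (hℓ : 2 ≤ ℓ) (f : Euc ℓ →ₗ[ℝ] ℝ) (hf : f ≠ 0)
    (c : Euc ℓ) (hc : f c = 1) (r : ℝ) (hr : 0 < r)
    (𝕊 : Set (Euc ℓ)) (h𝕊 : 𝕊 = {a | f a = 1 ∧ ‖a - c‖ ≤ r})
    (S : Set (Euc ℓ)) (hsub : S ⊆ 𝕊) (hfin : S.Finite) (hne : S.Nonempty) :
    (S.ncard = ℓ ∧ (∀ a ∈ S, ‖a - c‖ = r) ∧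
      (∃ δ : ℝ, ∀ a ∈ S, ∀ b ∈ S, a ≠ b → dist a b = δ) ∧
      (affineSpan ℝ S : Set (Euc ℓ)) = {x | f x = 1}) ↔
    (ddi S 𝕊 = {𝕊} ∧
      ∀ S' ⊆ 𝕊, ddi S' 𝕊 = {𝕊} → Cardinal.mk ↥S ≤ Cardinal.mk ↥S') := by
  subst h𝕊
  exact stmt_8_general hℓ f c hc r hr S
end
end

section
/- Let u ∈ ℝ^ℓ be a unit vector and let 𝕊 = {a ∈ ℝ^ℓ : ⟨u, a⟩ = 1 and ‖a − u‖ ≤ 1} be the unit ball of the hyperplane ⟨u, ·⟩ = 1 centered at u. Let D be a real n × ℓ matrix, set t = D u, T = D(I − u uᵀ), and Q = T Tᵀ, and let P be an n × n real matrix satisfying the Penrose conditions Q P Q = Q, P Q P = P, (Q P)ᵀ = Q P, and (P Q)ᵀ = P Q (so that P is the Moore–Penrose pseudoinverse Q⁺ of Q). Then the image of 𝕊 under D is exactly D(𝕊) = {p ∈ ℝⁿ : (I − Q P)(p − t) = 0 and (p − t)ᵀ P (p − t) ≤ 1}. -/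
open Matrix

noncomputable section

/-!
Write `E = 1 - u uᴴ` for the orthogonal projection onto `u^⊥`. It maps the unit ball onto the unit
ball of `u^⊥`, so `𝕊 = u + E(ball)` and `D(𝕊) = t + T(ball)` with `T = D E`. It remains to describe
the ellipsoid `T(ball)` by means of an inner inverse `P` of `T Tᴴ`. Then `T Tᴴ P T = T`, whence
`Tᴴ P T` is again an orthogonal projection. For `q = T y` this shows at once that `q` is fixed by
`T Tᴴ P`, that `qᴴ P q = yᴴ (Tᴴ P T) y ≤ yᴴ y`, and that equality holds for the preimage `Tᴴ P q`
of `q`.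
-/

section UnitBall

variable (R k : Type*) [NonUnitalNonAssocSemiring R] [One R] [Star R] [LE R] [Fintype k]

/-- The closed unit ball of the standard Hermitian form on `k → R`. It is spelled out through the
form because the norm on `k → ℝ` is the supremum norm. -/
def euclideanUnitBall : Set (k → R) := {y | star y ⬝ᵥ y ≤ 1}

end UnitBall

section StarProjection

variable {R k : Type*} [Ring R] [StarRing R] [Fintype k]

theorem isStarProjection_vecMulVec_star {u : k → R} (hu : star u ⬝ᵥ u = 1) :
    IsStarProjection (vecMulVec u (star u)) where
  isIdempotentElem := by
    rw [IsIdempotentElem, vecMulVec_mul, vecMul_vecMulVec, hu, one_smul]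
  isSelfAdjoint := by
    rw [IsSelfAdjoint, star_eq_conjTranspose, conjTranspose_vecMulVec, star_star]

theorem one_sub_vecMulVec_star_mulVec_eq_self_iff [DecidableEq k] {u : k → R}
    (hu : star u ⬝ᵥ u = 1) (y : k → R) :
    (1 - vecMulVec u (star u)) *ᵥ y = y ↔ star u ⬝ᵥ y = 0 := by
  rw [sub_mulVec, one_mulVec, sub_eq_self, vecMulVec_mulVec]
  constructor
  · intro h
    simpa only [dotProduct_smul, hu, op_smul_eq_mul, one_mul, dotProduct_zero] using
      congrArg (star u ⬝ᵥ ·) h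
  · intro h
    rw [h, MulOpposite.op_zero, zero_smul]

variable [PartialOrder R] [StarOrderedRing R]

theorem star_dotProduct_mulVec_le_of_isStarProjection {E : Matrix k k R}
    (hE : IsStarProjection E) (y : k → R) : star y ⬝ᵥ E *ᵥ y ≤ star y ⬝ᵥ y := by
  classical
  have hF : (1 - E)ᴴ * (1 - E) = 1 - E := by
    rw [← star_eq_conjTranspose, hE.one_sub.isSelfAdjoint, hE.one_sub.isIdempotentElem]
  have hnonneg : 0 ≤ star y ⬝ᵥ (1 - E) *ᵥ y := by
    rw [← hF]
    exact (posSemidef_conjTranspose_mul_self (1 - E)).dotProduct_mulVec_nonneg y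
  rwa [sub_mulVec, one_mulVec, dotProduct_sub, sub_nonneg] at hnonneg

theorem image_mulVec_euclideanUnitBall_of_isStarProjection {E : Matrix k k R}
    (hE : IsStarProjection E) :
    (E *ᵥ ·) '' euclideanUnitBall R k = {y | E *ᵥ y = y ∧ y ∈ euclideanUnitBall R k} := by
  ext z
  constructor
  · rintro ⟨y, hy, rfl⟩
    have hnorm : star (E *ᵥ y) ⬝ᵥ E *ᵥ y = star y ⬝ᵥ E *ᵥ y := by
      rw [star_mulVec, ← dotProduct_mulVec, mulVec_mulVec, ← star_eq_conjTranspose,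
        hE.isSelfAdjoint, hE.isIdempotentElem]
    refine ⟨by rw [mulVec_mulVec, hE.isIdempotentElem], ?_⟩
    exact (hnorm.trans_le (star_dotProduct_mulVec_le_of_isStarProjection hE y)).trans hy
  · rintro ⟨hfix, hz⟩
    exact ⟨z, hz, hfix⟩

theorem add_image_image_mulVec_euclideanUnitBall [DecidableEq k] {u : k → R}
    (hu : star u ⬝ᵥ u = 1) :
    (u + ·) '' (((1 - vecMulVec u (star u)) *ᵥ ·) '' euclideanUnitBall R k) =
      {a | star u ⬝ᵥ a = 1 ∧ a - u ∈ euclideanUnitBall R k} := by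
  rw [image_mulVec_euclideanUnitBall_of_isStarProjection
    (isStarProjection_vecMulVec_star hu).one_sub]
  ext a
  simp only [Set.image_add_left, Set.mem_preimage, Set.mem_ofPred_eq, neg_add_eq_sub,
    one_sub_vecMulVec_star_mulVec_eq_self_iff hu, dotProduct_sub, hu, sub_eq_zero]

end StarProjection

section InnerInverse

variable {R m k : Type*} [Ring R] [StarRing R] [Fintype m] [Fintype k]

theorem star_mulVec_dotProduct_mulVec_mulVec (T : Matrix m k R) (P : Matrix m m R) (y : k → R) :
    star (T *ᵥ y) ⬝ᵥ P *ᵥ (T *ᵥ y) = star y ⬝ᵥ (Tᴴ * P * T) *ᵥ y := by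
  simp only [star_mulVec, ← dotProduct_mulVec, mulVec_mulVec, Matrix.mul_assoc]

variable [PartialOrder R] [StarOrderedRing R] [NoZeroDivisors R]
  {T : Matrix m k R} {P : Matrix m m R}

theorem mul_conjTranspose_mul_mul_eq_self (hP : T * Tᴴ * P * (T * Tᴴ) = T * Tᴴ) :
    T * Tᴴ * P * T = T := by
  classical
  have h : (T * Tᴴ * P - 1) * (T * Tᴴ) = 0 := by
    rw [Matrix.sub_mul, hP, Matrix.one_mul, sub_self]
  rwa [mul_self_mul_conjTranspose_eq_zero, Matrix.sub_mul, Matrix.one_mul, sub_eq_zero] at h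

theorem isStarProjection_conjTranspose_mul_mul (hP : T * Tᴴ * P * (T * Tᴴ) = T * Tᴴ) :
    IsStarProjection (Tᴴ * P * T) := by
  set E := Tᴴ * P * T with hE
  have hTE : T * E = T := by
    simpa only [hE, Matrix.mul_assoc] using mul_conjTranspose_mul_mul_eq_self hP
  have hEE : Eᴴ * E = E := by
    calc Eᴴ * E = (T * E)ᴴ * P * T := by
          simp only [hE, conjTranspose_mul, Matrix.mul_assoc]
      _ = E := by rw [hTE]
  have hsymm : Eᴴ = E := by
    rw [← hEE, conjTranspose_mul, conjTranspose_conjTranspose]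
  exact ⟨by rwa [hsymm] at hEE, hsymm⟩

theorem image_mulVec_euclideanUnitBall [DecidableEq m]
    (hP : T * Tᴴ * P * (T * Tᴴ) = T * Tᴴ) :
    (T *ᵥ ·) '' euclideanUnitBall R k =
      {q | (1 - T * Tᴴ * P) *ᵥ q = 0 ∧ star q ⬝ᵥ P *ᵥ q ≤ 1} := by
  have hE := isStarProjection_conjTranspose_mul_mul hP
  ext q
  constructor
  · rintro ⟨y, hy, rfl⟩
    constructor
    · rw [mulVec_mulVec, Matrix.sub_mul, Matrix.one_mul, mul_conjTranspose_mul_mul_eq_self hP,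
        sub_self, zero_mulVec]
    · rw [star_mulVec_dotProduct_mulVec_mulVec]
      exact (star_dotProduct_mulVec_le_of_isStarProjection hE y).trans hy
  · rintro ⟨hfix, hq⟩
    rw [sub_mulVec, one_mulVec, sub_eq_zero] at hfix
    let y := Tᴴ *ᵥ (P *ᵥ q)
    have hTy : T *ᵥ y = q := by
      rw [mulVec_mulVec, mulVec_mulVec, ← hfix]
    have hEy : (Tᴴ * P * T) *ᵥ y = y := by
      rw [← mulVec_mulVec, hTy, ← mulVec_mulVec]
    refine ⟨y, ?_, hTy⟩
    rwa [← hTy, star_mulVec_dotProduct_mulVec_mulVec, hEy] at hq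

end InnerInverse

theorem stmt_16_general {R m k : Type*} [Ring R] [PartialOrder R] [StarRing R]
    [StarOrderedRing R] [NoZeroDivisors R] [Fintype m] [DecidableEq m] [Fintype k] [DecidableEq k]
    {u : k → R} (hu : star u ⬝ᵥ u = 1) {D T : Matrix m k R}
    (hT : T = D * (1 - vecMulVec u (star u))) {Q P : Matrix m m R} (hQ : Q = T * Tᴴ)
    (hP : Q * P * Q = Q) :
    (D *ᵥ ·) '' {a | star u ⬝ᵥ a = 1 ∧ star (a - u) ⬝ᵥ (a - u) ≤ 1} =
      {p | (1 - Q * P) *ᵥ (p - D *ᵥ u) = 0 ∧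
        star (p - D *ᵥ u) ⬝ᵥ P *ᵥ (p - D *ᵥ u) ≤ 1} := by
  have hD (y : k → R) :
      D *ᵥ (u + (1 - vecMulVec u (star u)) *ᵥ y) = D *ᵥ u + T *ᵥ y := by
    rw [mulVec_add, mulVec_mulVec, hT]
  calc
    _ = (D *ᵥ ·) '' ((u + ·) '' (((1 - vecMulVec u (star u)) *ᵥ ·) '' euclideanUnitBall R k)) :=
      congrArg _ (add_image_image_mulVec_euclideanUnitBall hu).symm
    _ = (D *ᵥ u + ·) '' ((T *ᵥ ·) '' euclideanUnitBall R k) := by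
      simp only [Set.image_image, hD]
    _ = _ := by
      subst hQ
      simp only [image_mulVec_euclideanUnitBall hP, Set.image_add_left, Set.preimage_ofPred_eq,
        neg_add_eq_sub]

theorem stmt_16 {ℓ n : ℕ} (u : Fin ℓ → ℝ) (hu : u ⬝ᵥ u = 1)
    (𝕊 : Set (Fin ℓ → ℝ)) (h𝕊 : 𝕊 = {a | u ⬝ᵥ a = 1 ∧ (a - u) ⬝ᵥ (a - u) ≤ 1})
    (D : Matrix (Fin n) (Fin ℓ) ℝ)
    (t : Fin n → ℝ) (ht : t = D.mulVec u)
    (T : Matrix (Fin n) (Fin ℓ) ℝ) (hT : T = D * (1 - Matrix.vecMulVec u u))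
    (Q : Matrix (Fin n) (Fin n) ℝ) (hQ : Q = T * T.transpose)
    (P : Matrix (Fin n) (Fin n) ℝ)
    (hP1 : Q * P * Q = Q) (hP2 : P * Q * P = P)
    (hP3 : (Q * P).transpose = Q * P) (hP4 : (P * Q).transpose = P * Q) :
    (fun a => D.mulVec a) '' 𝕊 =
      {p : Fin n → ℝ | (1 - Q * P).mulVec (p - t) = 0 ∧
        (p - t) ⬝ᵥ P.mulVec (p - t) ≤ 1} := by
  subst ht h𝕊
  -- `star` on `ℝ` is the identity by definition, so `Tᴴ` and `Tᵀ` agree up to unfolding.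
  exact stmt_16_general hu hT hQ hP1
end
end
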